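/- arXiv:2511.03557 — 2 statements merged into one kernel-verified Lean document; each statement's English description precedes it below -/
import Mathlib

section
/- Let F be the smallest family of finite posets containing all X-free posets and closed under disjoint unions and ordinal sums. Then every poset P in F satisfies s_k(O(P)) ≤ s_k(C(P)) for all k ≥ 0. -/
open Set

variable {E : Type*} [AddCommGroup E] [Module ℝ E]

/-- A polytope: the convex hull of a finite set of points. -/
def IsPolytope (P : Set E) : Prop := ∃ S : Finset E, P = convexHull ℝ (S : Set E)

open Classical in
/-- Dimension of a polytope: `-1` for the empty set, else the dimension of its affine span. -/
noncomputable def polyDim (P : Set E) : ℤ :=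
  if P = ∅ then -1 else (Module.finrank ℝ (vectorSpan ℝ P) : ℤ)

/-- Number of vertices (extreme points). -/
noncomputable def vertexCount (P : Set E) : ℕ := (P.extremePoints ℝ).ncard

/-- A simplex: a polytope with `dim + 1` vertices (the empty set counts as a simplex). -/
def IsSimplex (P : Set E) : Prop :=
  IsPolytope P ∧ (vertexCount P : ℤ) = polyDim P + 1

/-- Faces of a polytope are its extreme subsets. -/
def IsFaceOf (F P : Set E) : Prop := IsExtreme ℝ P F

/-- Number of `k`-dimensional simplex faces of `P`. -/
noncomputable def simpCount (P : Set E) (k : ℤ) : ℕ :=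
  {F : Set E | IsFaceOf F P ∧ IsSimplex F ∧ polyDim F = k}.ncard

/-- Number of `k`-dimensional simplex faces of `P` containing the origin. -/
noncomputable def simpCount0 (P : Set E) (k : ℤ) : ℕ :=
  {F : Set E | IsFaceOf F P ∧ IsSimplex F ∧ polyDim F = k ∧ (0 : E) ∈ F}.ncard

/-- Number of `k`-dimensional simplex faces of `P` not containing the origin. -/
noncomputable def simpCount1 (P : Set E) (k : ℤ) : ℕ :=
  {F : Set E | IsFaceOf F P ∧ IsSimplex F ∧ polyDim F = k ∧ (0 : E) ∉ F}.ncard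

/-- The order polytope of a poset. -/
def orderPolytope (α : Type*) [PartialOrder α] : Set (α → ℝ) :=
  {x | (∀ p, 0 ≤ x p ∧ x p ≤ 1) ∧ ∀ p q : α, p ≤ q → x p ≤ x q}

/-- The chain polytope of a poset. -/
def chainPolytope (α : Type*) [PartialOrder α] : Set (α → ℝ) :=
  {x | (∀ p, 0 ≤ x p) ∧ ∀ s : Finset α, IsChain (· ≤ ·) (s : Set α) → ∑ p ∈ s, x p ≤ 1}

open Classical in
/-- Characteristic vector of a subset. -/
noncomputable def chi {α : Type*} (S : Set α) : α → ℝ := fun p => if p ∈ S then 1 else 0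

/-- A poset contains the poset `X` (one middle element covering two incomparable minimal
elements and covered by two incomparable maximal elements) as an induced subposet. -/
def HasX (α : Type) [PartialOrder α] : Prop :=
  ∃ a b m c d : α, a < m ∧ b < m ∧ m < c ∧ m < d ∧
    ¬ a ≤ b ∧ ¬ b ≤ a ∧ ¬ c ≤ d ∧ ¬ d ≤ c

/-- The family `F` of finite posets generated from `X`-free posets by disjoint unions
and ordinal sums (lexicographic sums). -/
inductive InFam : (α : Type) → PartialOrder α → Prop
  | xfree (α : Type) (inst : PartialOrder α) (hfin : Finite α) (hx : ¬ @HasX α inst) :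
      InFam α inst
  | disjUnion {α β : Type} (ia : PartialOrder α) (ib : PartialOrder β) :
      InFam α ia → InFam β ib → InFam (α ⊕ β) (@Sum.instPartialOrder α β ia ib)
  | ordinalSum {α β : Type} (ia : PartialOrder α) (ib : PartialOrder β) :
      InFam α ia → InFam β ib → InFam (α ⊕ₗ β) (@Sum.Lex.partialOrder α β ia ib)


/-- Affine independence of a finite set, via weights. -/
def AffInd (S : Finset E) : Prop :=
  ∀ w : E → ℝ, ∑ s ∈ S, w s = 0 → ∑ s ∈ S, w s • s = 0 → ∀ s ∈ S, w s = 0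

/-- Linear independence of the nonzero elements of a finite set, via weights. -/
def LinInd (S : Finset E) : Prop :=
  ∀ w : E → ℝ, ∑ s ∈ S, w s • s = 0 → ∀ s ∈ S, s ≠ 0 → w s = 0

/-- Vertex sets of simplex faces (including the empty one). -/
def SF (P : Set E) : Set (Finset E) :=
  {S | AffInd S ∧ IsExtreme ℝ P (convexHull ℝ (S : Set E))}

theorem affInd_iff (S : Finset E) : AffInd S ↔ AffineIndependent ℝ ((↑) : S → E) := by
  constructor
  · intro h
    rw [affineIndependent_iff]
    intro s w h0 h1 e he
    classical
    let w' : E → ℝ := fun x => if hx : x ∈ S then (if (⟨x, hx⟩ : S) ∈ s then w ⟨x, hx⟩ else 0) else 0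
    have key : ∀ x : S, w' x = if x ∈ s then w x else 0 := by
      intro x; simp [w']
    have h2 := h w' ?_ ?_ e e.2
    · rw [key] at h2; simpa [he] using h2
    · rw [← Finset.sum_coe_sort S w']
      simp only [key]
      rw [Finset.sum_ite_mem, Finset.univ_inter]; exact h0
    · rw [← Finset.sum_coe_sort S (fun x => w' x • x)]
      simp only [key]
      simp only [ite_smul, zero_smul]
      rw [Finset.sum_ite_mem, Finset.univ_inter]; exact h1
  · intro h w h0 h1
    exact h.eq_zero_of_sum_eq_zero_subtype h0 h1

theorem AffInd.mono {S T : Finset E} (h : AffInd S) (hT : T ⊆ S) : AffInd T := by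
  classical
  intro w h0 h1 s hs
  have := h (fun x => if x ∈ T then w x else 0) ?_ ?_ s (hT hs)
  · simpa [hs] using this
  · rw [Finset.sum_ite_mem, Finset.inter_eq_right.2 hT]; exact h0
  · simp only [ite_smul, zero_smul]; rw [Finset.sum_ite_mem, Finset.inter_eq_right.2 hT]; exact h1

theorem LinInd.affInd {S : Finset E} (h : LinInd S) : AffInd S := by
  intro w h0 h1
  have h2 := h w h1
  intro s hs
  by_cases h : s = 0
  · subst h
    rw [Finset.sum_eq_single_of_mem 0 hs (fun b hb hb0 => h2 b hb hb0)] at h0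
    exact h0
  · exact h2 s hs h

theorem AffInd.linInd {S : Finset E} (h : AffInd S) (h0 : (0 : E) ∈ S) : LinInd S := by
  classical
  intro w hw s hs hs0
  have := h (fun x => if x = 0 then w 0 - ∑ s ∈ S, w s else w x) ?_ ?_ s hs
  · simpa [hs0] using this
  · rw [← Finset.add_sum_erase _ _ h0, ← Finset.add_sum_erase _ w h0]
    have e : ∑ x ∈ S.erase 0, (if x = 0 then w 0 - (w 0 + ∑ x ∈ S.erase 0, w x) else w x)
        = ∑ x ∈ S.erase 0, w x :=
      Finset.sum_congr rfl (fun x hx => by rw [if_neg (Finset.mem_erase.1 hx).1])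
    rw [e]
    simp
  · refine Eq.trans ?_ hw
    apply Finset.sum_congr rfl
    intro x hx
    by_cases hx0 : x = 0 <;> simp [hx0]

theorem hull_mono_fin {S T : Finset E} (h : T ⊆ S) :
    convexHull ℝ (T : Set E) ⊆ convexHull ℝ (S : Set E) :=
  convexHull_mono (by exact_mod_cast h)

theorem AffInd.extreme {S T : Finset E} (h : AffInd S) (hT : T ⊆ S) :
    IsExtreme ℝ (convexHull ℝ (S : Set E)) (convexHull ℝ (T : Set E)) := by
  classical
  refine ⟨hull_mono_fin hT, ?_⟩
  rintro x hx y hy z hz ⟨a, b, ha, hb, hab, rfl⟩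
  rw [Finset.mem_convexHull'] at hx hy hz
  obtain ⟨u, hu0, hu1, hu⟩ := hx
  obtain ⟨v, hv0, hv1, hv⟩ := hy
  obtain ⟨w, hw0, hw1, hw⟩ := hz
  set w' : E → ℝ := fun x => if x ∈ T then w x else 0 with hw'
  have e1 : ∑ s ∈ S, w' s = 1 := by
    rw [← hw1, hw', Finset.sum_ite_mem, Finset.inter_eq_right.2 hT]
  have e2 : ∑ s ∈ S, w' s • s = a • x + b • y := by
    rw [← hw, hw']
    simp only [ite_smul, zero_smul]; rw [Finset.sum_ite_mem, Finset.inter_eq_right.2 hT]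
  have key := h (fun s => a * u s + b * v s - w' s) ?_ ?_
  · have hz : ∀ s ∈ S, s ∉ T → u s = 0 := by
      intro s hs hsT
      have h1 := key s hs
      have h2 : w' s = 0 := by simp [hw', hsT]
      have h3 := mul_nonneg hb.le (hv0 s hs)
      have h4 := hu0 s hs
      by_contra h5
      have h6 : 0 < u s := lt_of_le_of_ne h4 (Ne.symm h5)
      have h7 := mul_pos ha h6
      simp only [h2] at h1
      linarith
    rw [Finset.mem_convexHull']
    refine ⟨u, fun y hy => hu0 y (hT hy), ?_, ?_⟩
    · rw [← hu1]; exact Finset.sum_subset hT (fun s hs hsT => hz s hs hsT)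
    · rw [← hu]; exact Finset.sum_subset hT (fun s hs hsT => by simp [hz s hs hsT])
  · rw [Finset.sum_sub_distrib, Finset.sum_add_distrib, ← Finset.mul_sum, ← Finset.mul_sum, hu1, hv1, e1]
    linarith
  · simp only [sub_smul, add_smul, mul_smul]
    rw [Finset.sum_sub_distrib, Finset.sum_add_distrib, ← Finset.smul_sum, ← Finset.smul_sum, hu, hv, e2]
    simp

theorem SF.mono {P : Set E} {S T : Finset E} (h : S ∈ SF P) (hT : T ⊆ S) : T ∈ SF P :=
  ⟨h.1.mono hT, h.2.trans (h.1.extreme hT)⟩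

theorem singleton_mem_SF {P : Set E} {x : E} : {x} ∈ SF P ↔ x ∈ P.extremePoints ℝ := by
  constructor
  · rintro ⟨_, h⟩
    simpa using h
  · intro h
    refine ⟨?_, by simpa using h⟩
    intro w h0 _ s hs
    simp only [Finset.sum_singleton] at h0
    simp only [Finset.mem_singleton] at hs
    rw [hs, h0]

theorem SF.ext {P : Set E} {S : Finset E} (h : S ∈ SF P) {s : E} (hs : s ∈ S) :
    s ∈ P.extremePoints ℝ :=
  singleton_mem_SF.1 (SF.mono h (by simpa using hs))

theorem empty_mem_SF (P : Set E) : ∅ ∈ SF P := by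
  refine ⟨fun w _ _ s hs => by simp at hs, ?_⟩
  simp only [Finset.coe_empty, convexHull_empty]
  exact ⟨empty_subset _, fun x _ y _ z hz => hz.elim⟩

theorem SF.subset {P : Set E} {S : Finset E} (h : S ∈ SF P) : (S : Set E) ⊆ P :=
  (subset_convexHull ℝ _).trans h.2.1

/-- An extreme point lying in a hull is one of the generators. -/
theorem mem_of_ext {P : Set E} {S : Set E} {x : E} (hx : x ∈ P.extremePoints ℝ)
    (hS : convexHull ℝ S ⊆ P) (h : x ∈ convexHull ℝ S) : x ∈ S :=
  extremePoints_convexHull_subset (inter_extremePoints_subset_extremePoints_of_subset hS ⟨h, hx⟩)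

/-- Intersection of a hull with a face. -/
theorem hull_inter_face {P F : Set E} (hF : IsExtreme ℝ P F) {S : Set E}
    (hS : convexHull ℝ S ⊆ P) {z : E} (hz : z ∈ convexHull ℝ S) (hzF : z ∈ F) :
    z ∈ convexHull ℝ (S ∩ F) := by
  have key : ∀ z ∈ convexHull ℝ S, z ∈ F → z ∈ convexHull ℝ (S ∩ F) := by
    set A : Set E := {z | z ∈ convexHull ℝ S ∧ (z ∈ F → z ∈ convexHull ℝ (S ∩ F))} with hA
    have hAc : Convex ℝ A := by
      rw [convex_iff_openSegment_subset]
      rintro x ⟨hx, hx'⟩ y ⟨hy, hy'⟩ z hz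
      refine ⟨(convex_convexHull ℝ S).openSegment_subset hx hy hz, fun hzF => ?_⟩
      have h1 := hF.2 (hS hx) (hS hy) hzF hz
      have h2 := hF.right_mem_of_mem_openSegment (hS hx) (hS hy) hzF hz
      exact (convex_convexHull ℝ _).openSegment_subset (hx' h1) (hy' h2) hz
    have : convexHull ℝ S ⊆ A := convexHull_min
      (fun x hx => ⟨subset_convexHull ℝ _ hx, fun h => subset_convexHull ℝ _ ⟨hx, h⟩⟩) hAc
    exact fun z hz => (this hz).2
  exact key z hz hzF

section aff
variable {G : Type*} [AddCommGroup G] [Module ℝ G]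

theorem IsExtreme.image_affine (e : E ≃ᵃ[ℝ] G) {P F : Set E} (h : IsExtreme ℝ P F) :
    IsExtreme ℝ (e '' P) (e '' F) := by
  refine ⟨image_mono h.1, ?_⟩
  rintro _ ⟨x, hx, rfl⟩ _ ⟨y, hy, rfl⟩ _ ⟨z, hz, rfl⟩ h2
  have h3 := image_openSegment ℝ e.toAffineMap x y
  simp only [AffineEquiv.coe_toAffineMap] at h3
  rw [← h3] at h2
  obtain ⟨z', hz', h4⟩ := h2
  rw [e.injective h4] at hz'
  exact ⟨x, h.2 hx hy hz hz', rfl⟩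

theorem SF_image_mem (e : E ≃ᵃ[ℝ] G) {P : Set E} {S : Finset E} (h : S ∈ SF P) :
    S.map e.toEquiv.toEmbedding ∈ SF (e '' P) := by
  refine ⟨?_, ?_⟩
  · have h1 := (e.affineIndependent_set_of_eq_iff (s := (S : Set E))).2
      ((affInd_iff S).1 h.1)
    rw [affInd_iff]
    have : ((S.map e.toEquiv.toEmbedding : Finset G) : Set G) = e '' S := by simp
    have h2 : ∀ T : Set G, T = e '' S → AffineIndependent ℝ ((↑) : T → G) := by
      rintro _ rfl; exact h1
    exact h2 _ this
  · have h2 := h.2.image_affine e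
    have h3 := e.toAffineMap.image_convexHull (S : Set E)
    simp only [AffineEquiv.coe_toAffineMap] at h3
    rw [h3] at h2
    simpa using h2

theorem SF_image (e : E ≃ᵃ[ℝ] G) (P : Set E) :
    SF (e '' P) = (fun S : Finset E => S.map e.toEquiv.toEmbedding) '' SF P := by
  apply Subset.antisymm
  · intro T hT
    refine ⟨T.map e.symm.toEquiv.toEmbedding, ?_, ?_⟩
    · have := SF_image_mem e.symm hT
      have h2 : e.symm '' (e '' P) = P := by
        ext x; simp
      rwa [h2] at this
    · ext x; simp
  · rintro _ ⟨S, hS, rfl⟩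
    exact SF_image_mem e hS

/-- Number of simplex faces with `n` vertices. -/
noncomputable def NS (P : Set E) (n : ℕ) : ℕ := {S | S ∈ SF P ∧ S.card = n}.ncard

theorem NS_image (e : E ≃ᵃ[ℝ] G) (P : Set E) (n : ℕ) : NS (e '' P) n = NS P n := by
  unfold NS
  rw [← Set.ncard_image_of_injective {S | S ∈ SF P ∧ S.card = n}
    (Finset.map_injective e.toEquiv.toEmbedding)]
  congr 1
  rw [SF_image]
  ext T
  constructor
  · rintro ⟨⟨S, hS, rfl⟩, h⟩
    exact ⟨S, ⟨hS, by simpa using h⟩, rfl⟩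
  · rintro ⟨S, ⟨hS, h⟩, rfl⟩
    exact ⟨⟨S, hS, rfl⟩, by simpa using h⟩

theorem SF_finite_image (e : E ≃ᵃ[ℝ] G) {P : Set E} (h : (SF P).Finite) : (SF (e '' P)).Finite := by
  rw [SF_image]; exact h.image _

end aff

theorem SF_finite_of_ext {P : Set E} (h : (P.extremePoints ℝ).Finite) : (SF P).Finite := by
  apply (Finset.finite_toSet h.toFinset.powerset).subset
  intro S hS
  simp only [Finset.coe_powerset, mem_preimage, mem_powerset_iff, Finite.coe_toFinset]
  intro s hs
  exact SF.ext hS hs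

theorem polyDim_hull {S : Finset E} (h : AffInd S) :
    polyDim (convexHull ℝ (S : Set E)) = (S.card : ℤ) - 1 := by
  unfold polyDim
  split_ifs with h0
  · simp only [convexHull_eq_empty, Finset.coe_eq_empty] at h0
    simp [h0]
  · have hne : S.Nonempty := by
      rw [Finset.nonempty_iff_ne_empty]; rintro rfl; simp at h0
    obtain ⟨n, hn⟩ : ∃ n, S.card = n + 1 := ⟨S.card - 1, by have := hne.card_pos; omega⟩
    have h1 := (affineIndependent_iff_finrank_vectorSpan_eq ℝ ((↑) : S → E) (n := n)
      (by simpa using hn)).1 ((affInd_iff S).1 h)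
    have h2 : vectorSpan ℝ (convexHull ℝ (S : Set E)) = vectorSpan ℝ (S : Set E) := by
      rw [← direction_affineSpan, affineSpan_convexHull, direction_affineSpan]
    rw [h2]
    have h3 : range ((↑) : S → E) = (S : Set E) := Subtype.range_coe
    rw [h3] at h1
    rw [h1, hn]; push_cast; ring

theorem ext_hull {S : Finset E} (h : AffInd S) :
    (convexHull ℝ (S : Set E)).extremePoints ℝ = S := by
  apply Subset.antisymm extremePoints_convexHull_subset
  intro s hs
  have := h.extreme (T := {s}) (by simpa using hs)
  simpa using this

theorem simpCount_eq {α : Type*} [Finite α] (P : Set (α → ℝ)) (n : ℕ) :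
    simpCount P (n : ℤ) = NS P (n + 1) := by
  unfold simpCount NS
  have hinj : InjOn (fun S : Finset (α → ℝ) => convexHull ℝ (S : Set (α → ℝ)))
      {S | S ∈ SF P ∧ S.card = n + 1} := by
    intro S hS T hT h
    have h1 := ext_hull hS.1.1
    have h2 := ext_hull hT.1.1
    simp only at h
    rw [h, h2] at h1
    exact_mod_cast h1.symm
  rw [← hinj.ncard_image]
  congr 1
  ext F
  constructor
  · rintro ⟨h1, ⟨⟨S0, hS0⟩, h3⟩, h4⟩
    have hfin : (F.extremePoints ℝ).Finite :=
      (Finset.finite_toSet S0).subset (by rw [hS0]; exact extremePoints_convexHull_subset)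
    have hc : IsCompact F := by
      rw [hS0]; exact (Finset.finite_toSet S0).isCompact_convexHull ℝ
    have hconv : Convex ℝ F := by rw [hS0]; exact convex_convexHull ℝ _
    have hF : convexHull ℝ (F.extremePoints ℝ) = F := by
      rw [← (hfin.isCompact_convexHull ℝ).isClosed.closure_eq]
      exact closure_convexHull_extremePoints hc hconv
    set S := hfin.toFinset with hS
    have hSe : (S : Set (α → ℝ)) = F.extremePoints ℝ := by simp [hS]
    rw [h4] at h3
    have hcard : S.card = n + 1 := by
      have : vertexCount F = S.card := by
        unfold vertexCount; rw [← hSe, Set.ncard_coe_finset]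
      rw [this] at h3
      exact_mod_cast h3
    refine ⟨S, ⟨⟨?_, ?_⟩, hcard⟩, ?_⟩
    · rw [affInd_iff, affineIndependent_iff_finrank_vectorSpan_eq ℝ _ (n := n) (by simpa using hcard)]
      have e3 : range ((↑) : S → (α → ℝ)) = (S : Set (α → ℝ)) := Subtype.range_coe
      rw [e3]
      have h2 : vectorSpan ℝ (convexHull ℝ (S : Set (α → ℝ))) = vectorSpan ℝ (S : Set (α → ℝ)) := by
        rw [← direction_affineSpan, affineSpan_convexHull, direction_affineSpan]
      rw [← h2, hSe, hF]
      unfold polyDim at h4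
      split_ifs at h4 with h5
      exact_mod_cast h4
    · rw [hSe, hF]; exact h1
    · simp only [hSe, hF]
  · rintro ⟨S, ⟨⟨h1, h2⟩, h3⟩, rfl⟩
    have hd := polyDim_hull h1
    refine ⟨h2, ⟨⟨S, rfl⟩, ?_⟩, ?_⟩
    · simp only
      rw [hd, vertexCount, ext_hull h1, Set.ncard_coe_finset]; ring
    · simp only
      rw [hd, h3]; push_cast; ring

section prod
variable {G : Type*} [AddCommGroup G] [Module ℝ G]

theorem affInd_left {x : E} {T : Finset G} : AffInd ({x} ×ˢ T) ↔ AffInd T := by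
  constructor
  · intro h w h0 h1 s hs
    refine h (fun p => w p.2) ?_ ?_ (x, s) (by simpa using hs)
    · simpa [Finset.sum_product] using h0
    · simp only [Finset.sum_product, Finset.sum_singleton]
      apply Prod.ext
      · simp [Prod.fst_sum, ← Finset.sum_smul, h0]
      · simpa [Prod.snd_sum] using h1
  · rintro h w h0 h1 ⟨x', s⟩ hs
    simp only [Finset.mem_product, Finset.mem_singleton] at hs
    obtain ⟨rfl, hs⟩ := hs
    refine h (fun y => w (x', y)) ?_ ?_ s hs
    · simpa [Finset.sum_product] using h0
    · have := congrArg Prod.snd h1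
      simpa [Finset.sum_product, Prod.snd_sum] using this

theorem affInd_right {S : Finset E} {y : G} : AffInd (S ×ˢ {y}) ↔ AffInd S := by
  constructor
  · intro h w h0 h1 s hs
    refine h (fun p => w p.1) ?_ ?_ (s, y) (by simpa using hs)
    · simpa [Finset.sum_product] using h0
    · simp only [Finset.sum_product, Finset.sum_singleton]
      apply Prod.ext
      · simpa [Prod.fst_sum] using h1
      · simp [Prod.snd_sum, ← Finset.sum_smul, h0]
  · rintro h w h0 h1 ⟨s, y'⟩ hs
    simp only [Finset.mem_product, Finset.mem_singleton] at hs
    obtain ⟨hs, rfl⟩ := hs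
    refine h (fun x => w (x, y')) ?_ ?_ s hs
    · simpa [Finset.sum_product] using h0
    · have := congrArg Prod.fst h1
      simpa [Finset.sum_product, Prod.fst_sum] using this

theorem openSegment_fst {p q r : E × G} (h : p ∈ openSegment ℝ q r) :
    p.1 ∈ openSegment ℝ q.1 r.1 := by
  obtain ⟨a, b, ha, hb, hab, rfl⟩ := h
  exact ⟨a, b, ha, hb, hab, rfl⟩

theorem openSegment_snd {p q r : E × G} (h : p ∈ openSegment ℝ q r) :
    p.2 ∈ openSegment ℝ q.2 r.2 := by
  obtain ⟨a, b, ha, hb, hab, rfl⟩ := h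
  exact ⟨a, b, ha, hb, hab, rfl⟩

theorem isExtreme_prod {P F : Set E} {Q H : Set G} (h1 : IsExtreme ℝ P F) (h2 : IsExtreme ℝ Q H) :
    IsExtreme ℝ (P ×ˢ Q) (F ×ˢ H) := by
  refine ⟨prod_mono h1.1 h2.1, ?_⟩
  rintro x hx y hy z hz hzz
  exact ⟨h1.2 hx.1 hy.1 hz.1 (openSegment_fst hzz), h2.2 hx.2 hy.2 hz.2 (openSegment_snd hzz)⟩

theorem SF_left {P : Set E} {Q : Set G} {x : E} {T : Finset G} (hx : x ∈ P.extremePoints ℝ) :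
    ({x} ×ˢ T : Finset (E × G)) ∈ SF (P ×ˢ Q) ↔ T ∈ SF Q := by
  unfold SF
  simp only [mem_ofPred_eq, affInd_left, Finset.coe_product, convexHull_prod,
    Finset.coe_singleton, convexHull_singleton]
  refine and_congr_right (fun _ => ⟨fun h => ?_, fun h => isExtreme_prod (by simpa using hx) h⟩)
  have hxP := hx.1
  refine ⟨fun y hy => (h.1 (show (x, y) ∈ _ from ⟨rfl, hy⟩)).2, ?_⟩
  rintro y hy z hz u hu ⟨a, b, ha, hb, hab, rfl⟩
  refine (h.2 (x := (x, y)) ⟨hxP, hy⟩ (y := (x, z)) ⟨hxP, hz⟩ (z := (x, a • y + b • z)) ⟨rfl, hu⟩ ?_).2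
  refine ⟨a, b, ha, hb, hab, ?_⟩
  simp [← add_smul, hab]

theorem SF_right {P : Set E} {Q : Set G} {y : G} {S : Finset E} (hy : y ∈ Q.extremePoints ℝ) :
    (S ×ˢ {y} : Finset (E × G)) ∈ SF (P ×ˢ Q) ↔ S ∈ SF P := by
  unfold SF
  simp only [mem_ofPred_eq, affInd_right, Finset.coe_product, convexHull_prod,
    Finset.coe_singleton, convexHull_singleton]
  refine and_congr_right (fun _ => ⟨fun h => ?_, fun h => isExtreme_prod h (by simpa using hy)⟩)
  have hyQ := hy.1
  refine ⟨fun x hx => (h.1 (show (x, y) ∈ _ from ⟨hx, rfl⟩)).1, ?_⟩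
  rintro x hx z hz u hu ⟨a, b, ha, hb, hab, rfl⟩
  refine (h.2 (x := (x, y)) ⟨hx, hyQ⟩ (y := (z, y)) ⟨hz, hyQ⟩ (z := (a • x + b • z, y)) ⟨hu, rfl⟩ ?_).1
  refine ⟨a, b, ha, hb, hab, ?_⟩
  simp [← add_smul, hab]

theorem SF_prod_aux {P : Set E} {Q : Set G} {S : Finset (E × G)} (hS : S ∈ SF (P ×ˢ Q))
    {p q : E × G} (hp : p ∈ S) (hq : q ∈ S) : p.1 = q.1 ∨ p.2 = q.2 := by
  classical
  by_contra! hne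
  obtain ⟨h1, h2⟩ := hne
  have ep := SF.ext hS hp
  have eq := SF.ext hS hq
  rw [extremePoints_prod] at ep eq
  have hmid : (2⁻¹ : ℝ) • p + (2⁻¹ : ℝ) • q ∈ convexHull ℝ (S : Set (E × G)) :=
    convex_convexHull ℝ _ (subset_convexHull ℝ _ hp) (subset_convexHull ℝ _ hq)
      (by norm_num) (by norm_num) (by norm_num)
  have hr : (p.1, q.2) ∈ S := by
    refine mem_of_ext (P := P ×ˢ Q) ?_ hS.2.1 ?_
    · rw [extremePoints_prod]; exact ⟨ep.1, eq.2⟩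
    · refine hS.2.2 (y := (q.1, p.2)) ⟨ep.1.1, eq.2.1⟩ ⟨eq.1.1, ep.2.1⟩ hmid
        ⟨2⁻¹, 2⁻¹, by norm_num, by norm_num, by norm_num, ?_⟩
      apply Prod.ext <;> simp [add_comm]
  have ht : (q.1, p.2) ∈ S := by
    refine mem_of_ext (P := P ×ˢ Q) ?_ hS.2.1 ?_
    · rw [extremePoints_prod]; exact ⟨eq.1, ep.2⟩
    · refine hS.2.2 (y := (p.1, q.2)) ⟨eq.1.1, ep.2.1⟩ ⟨ep.1.1, eq.2.1⟩ hmid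
        ⟨2⁻¹, 2⁻¹, by norm_num, by norm_num, by norm_num, ?_⟩
      apply Prod.ext <;> simp [add_comm]
  have hpq : p ≠ q := fun h => h1 (by rw [h])
  have hpr : p ≠ (p.1, q.2) := fun h => h2 (by rw [h])
  have hpt : p ≠ (q.1, p.2) := fun h => h1 (by rw [h])
  have hqr : q ≠ (p.1, q.2) := fun h => h1 (by rw [h])
  have hqt : q ≠ (q.1, p.2) := fun h => h2 (by rw [h])
  have hrt : (p.1, q.2) ≠ (q.1, p.2) := fun h => h1 (by simpa using congrArg Prod.fst h)
  set r := (p.1, q.2) with hr'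
  set t := (q.1, p.2) with ht'
  have hsub : ({p, q, r, t} : Finset (E × G)) ⊆ S := by
    intro x; simp only [Finset.mem_insert, Finset.mem_singleton]; rintro (rfl | rfl | rfl | rfl) <;> assumption
  have hA := hS.1.mono hsub
  have := hA (fun x => if x = p ∨ x = q then 1 else -1) ?_ ?_ p (by simp)
  · simp at this
  · rw [Finset.sum_insert (by simp [hpq, hpr, hpt]), Finset.sum_insert (by simp [hqr, hqt]),
      Finset.sum_insert (by simp [hrt]), Finset.sum_singleton]
    simp [hpr.symm, hpt.symm, hqr.symm, hqt.symm]
    try norm_num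
  · rw [Finset.sum_insert (by simp [hpq, hpr, hpt]), Finset.sum_insert (by simp [hqr, hqt]),
      Finset.sum_insert (by simp [hrt]), Finset.sum_singleton]
    simp only [hpr.symm, hpt.symm, hqr.symm, hqt.symm, true_or, or_true, or_self, if_true, if_false]
    apply Prod.ext <;> simp [r, t]

theorem SF_prod_cases {P : Set E} {Q : Set G} {S : Finset (E × G)} (hS : S ∈ SF (P ×ˢ Q))
    (hne : S.Nonempty) :
    (∃ x ∈ P.extremePoints ℝ, ∃ T ∈ SF Q, S = {x} ×ˢ T) ∨
    (∃ y ∈ Q.extremePoints ℝ, ∃ T ∈ SF P, S = T ×ˢ {y}) := by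
  classical
  obtain ⟨p, hp⟩ := hne
  have ep := SF.ext hS hp
  rw [extremePoints_prod] at ep
  by_cases h : ∀ q ∈ S, q.1 = p.1
  · left
    have hSe : S = {p.1} ×ˢ S.image Prod.snd := by
      ext ⟨a, b⟩
      simp only [Finset.mem_product, Finset.mem_singleton, Finset.mem_image]
      constructor
      · intro hab; exact ⟨h _ hab, _, hab, rfl⟩
      · rintro ⟨rfl, ⟨c, d⟩, hcd, rfl⟩
        have := h _ hcd
        simp only at this
        rw [← this]; exact hcd
    refine ⟨p.1, ep.1, S.image Prod.snd, ?_, hSe⟩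
    rw [hSe] at hS
    exact (SF_left ep.1).1 hS
  · right
    push Not at h
    obtain ⟨q, hq, hqp⟩ := h
    have h2 : q.2 = p.2 := (SF_prod_aux hS hq hp).resolve_left hqp
    have h : ∀ r ∈ S, r.2 = p.2 := by
      intro r hr
      by_contra h3
      have h4 := (SF_prod_aux hS hr hp).resolve_right h3
      have h5 := (SF_prod_aux hS hr hq).resolve_right (by rw [h2]; exact h3)
      exact hqp (by rw [← h5, h4])
    have hSe : S = S.image Prod.fst ×ˢ {p.2} := by
      ext ⟨a, b⟩
      simp only [Finset.mem_product, Finset.mem_singleton, Finset.mem_image]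
      constructor
      · intro hab; exact ⟨⟨_, hab, rfl⟩, h _ hab⟩
      · rintro ⟨⟨⟨c, d⟩, hcd, rfl⟩, rfl⟩
        have := h _ hcd
        simp only at this
        rw [← this]; exact hcd
    refine ⟨p.2, ep.2, S.image Prod.fst, ?_, hSe⟩
    rw [hSe] at hS
    exact (SF_right ep.2).1 hS

theorem ext_finite_of_SF {P : Set E} (h : (SF P).Finite) : (P.extremePoints ℝ).Finite := by
  apply Set.Finite.of_finite_image (f := fun x => ({x} : Finset E))
  · apply h.subset
    rintro _ ⟨x, hx, rfl⟩
    exact singleton_mem_SF.2 hx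
  · intro x _ y _ h; simpa using h

theorem NS_one (P : Set E) : NS P 1 = (P.extremePoints ℝ).ncard := by
  unfold NS
  rw [← Set.ncard_image_of_injective (P.extremePoints ℝ) (Finset.singleton_injective)]
  congr 1
  ext S
  simp only [mem_ofPred_eq, mem_image, Finset.card_eq_one]
  constructor
  · rintro ⟨h, x, rfl⟩; exact ⟨x, singleton_mem_SF.1 h, rfl⟩
  · rintro ⟨x, h, rfl⟩; exact ⟨singleton_mem_SF.2 h, x, rfl⟩

theorem NS_zero (P : Set E) : NS P 0 = 1 := by
  unfold NS
  rw [Set.ncard_eq_one]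
  refine ⟨∅, ?_⟩
  ext S
  simp only [mem_ofPred_eq, Finset.card_eq_zero, mem_singleton_iff]
  constructor
  · exact fun h => h.2
  · rintro rfl; exact ⟨empty_mem_SF P, rfl⟩

theorem SF_prod_finite {P : Set E} {Q : Set G} (hP : (SF P).Finite) (hQ : (SF Q).Finite) :
    (SF (P ×ˢ Q)).Finite := by
  apply SF_finite_of_ext
  rw [extremePoints_prod]
  exact (ext_finite_of_SF hP).prod (ext_finite_of_SF hQ)

theorem NS_prod_one (P : Set E) (Q : Set G) : NS (P ×ˢ Q) 1 = NS P 1 * NS Q 1 := by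
  rw [NS_one, NS_one, NS_one, extremePoints_prod, Set.ncard_prod]

theorem NS_prod {P : Set E} {Q : Set G} (hP : (SF P).Finite) (hQ : (SF Q).Finite) {n : ℕ}
    (hn : 2 ≤ n) : NS (P ×ˢ Q) n = NS P 1 * NS Q n + NS P n * NS Q 1 := by
  have hne : ∀ {S : Finset (E × G)}, S.card = n → S.Nonempty := by
    intro S h; rw [← Finset.card_pos]; omega
  rw [NS_one, NS_one]
  unfold NS
  rw [← Set.ncard_prod, ← Set.ncard_prod]
  set A := P.extremePoints ℝ ×ˢ {S | S ∈ SF Q ∧ S.card = n} with hA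
  set B := {S | S ∈ SF P ∧ S.card = n} ×ˢ Q.extremePoints ℝ with hB
  have hAf : A.Finite := (ext_finite_of_SF hP).prod (hQ.subset (fun S h => h.1))
  have hBf : B.Finite := (hP.subset (fun S h => h.1)).prod (ext_finite_of_SF hQ)
  let f : E × Finset G → Finset (E × G) := fun p => {p.1} ×ˢ p.2
  let g : Finset E × G → Finset (E × G) := fun p => p.1 ×ˢ {p.2}
  have hf : InjOn f A := by
    rintro ⟨x, S⟩ ⟨_, _, hS⟩ ⟨y, T⟩ ⟨_, _, hT⟩ h
    simp only [f] at h
    simp only at hS hT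
    have hSn : S.Nonempty := by rw [← Finset.card_pos]; omega
    obtain ⟨s, hs⟩ := hSn
    have h1 : (x, s) ∈ ({y} ×ˢ T : Finset (E × G)) := by rw [← h]; simpa using hs
    simp only [Finset.mem_product, Finset.mem_singleton] at h1
    obtain ⟨rfl, _⟩ := h1
    congr 1
    ext t
    have : (x, t) ∈ ({x} ×ˢ S : Finset (E × G)) ↔ (x, t) ∈ ({x} ×ˢ T : Finset (E × G)) := by rw [h]
    simpa using this
  have hg : InjOn g B := by
    rintro ⟨S, x⟩ ⟨⟨_, hS⟩, _⟩ ⟨T, y⟩ ⟨⟨_, hT⟩, _⟩ h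
    simp only [g] at h
    simp only at hS hT
    have hSn : S.Nonempty := by rw [← Finset.card_pos]; omega
    obtain ⟨s, hs⟩ := hSn
    have h1 : (s, x) ∈ (T ×ˢ {y} : Finset (E × G)) := by rw [← h]; simpa using hs
    simp only [Finset.mem_product, Finset.mem_singleton] at h1
    obtain ⟨_, rfl⟩ := h1
    congr 1
    ext t
    have : (t, x) ∈ (S ×ˢ {x} : Finset (E × G)) ↔ (t, x) ∈ (T ×ˢ {x} : Finset (E × G)) := by rw [h]
    simpa using this
  rw [← hf.ncard_image, ← hg.ncard_image, ← Set.ncard_union_eq ?_ (hAf.image _) (hBf.image _)]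
  · congr 1
    ext S
    constructor
    · rintro ⟨h1, h2⟩
      rcases SF_prod_cases h1 (hne h2) with ⟨x, hx, T, hT, rfl⟩ | ⟨y, hy, T, hT, rfl⟩
      · left; exact ⟨(x, T), ⟨hx, hT, by simpa using h2⟩, rfl⟩
      · right; exact ⟨(T, y), ⟨⟨hT, by simpa using h2⟩, hy⟩, rfl⟩
    · rintro (⟨⟨x, T⟩, ⟨hx, hT, h2⟩, rfl⟩ | ⟨⟨T, y⟩, ⟨⟨hT, h2⟩, hy⟩, rfl⟩)
      · exact ⟨(SF_left hx).2 hT, by simpa [f] using h2⟩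
      · exact ⟨(SF_right hy).2 hT, by simpa [g] using h2⟩
  · rw [Set.disjoint_left]
    rintro _ ⟨⟨x, S⟩, ⟨_, _, hS⟩, rfl⟩ ⟨⟨T, y⟩, _, h⟩
    simp only [f, g] at h
    simp only at hS
    have : 1 < S.card := by omega
    obtain ⟨a, ha, b, hb, hab⟩ := Finset.one_lt_card.1 this
    have h1 : (x, a) ∈ (T ×ˢ {y} : Finset (E × G)) := by rw [h]; simpa using ha
    have h2 : (x, b) ∈ (T ×ˢ {y} : Finset (E × G)) := by rw [h]; simpa using hb
    simp only [Finset.mem_product, Finset.mem_singleton] at h1 h2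
    exact hab (h1.2.trans h2.2.symm)

theorem NS_prod_le {E' G' : Type*} [AddCommGroup E'] [Module ℝ E'] [AddCommGroup G'] [Module ℝ G']
    {P : Set E} {Q : Set G} {P' : Set E'} {Q' : Set G'}
    (hP : (SF P).Finite) (hQ : (SF Q).Finite) (hP' : (SF P').Finite) (hQ' : (SF Q').Finite)
    (h1 : ∀ n, NS P n ≤ NS P' n) (h2 : ∀ n, NS Q n ≤ NS Q' n) (n : ℕ) :
    NS (P ×ˢ Q) n ≤ NS (P' ×ˢ Q') n := by
  rcases Nat.lt_or_ge n 2 with h | h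
  · interval_cases n
    · simp [NS_zero]
    · rw [NS_prod_one, NS_prod_one]
      exact Nat.mul_le_mul (h1 1) (h2 1)
  · rw [NS_prod hP hQ h, NS_prod hP' hQ' h]
    exact Nat.add_le_add (Nat.mul_le_mul (h1 _) (h2 _)) (Nat.mul_le_mul (h1 _) (h2 _))

end prod

section glue
variable {G : Type*} [AddCommGroup G] [Module ℝ G]

/-- `u` lies in the dilation `a • A` (with `0 • A = {0}` even for empty `A`). -/
def SC (a : ℝ) (A : Set E) (u : E) : Prop := (a = 0 ∧ u = 0) ∨ ∃ x ∈ A, u = a • x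

/-- Join / subdirect sum of two sets at the origin. -/
def Glue (A : Set E) (B : Set G) : Set (E × G) :=
  {z | ∃ a b : ℝ, 0 ≤ a ∧ 0 ≤ b ∧ a + b = 1 ∧ SC a A z.1 ∧ SC b B z.2}

theorem SC.zero_of {A : Set E} {u : E} (h : SC 0 A u) : u = 0 := by
  rcases h with h | ⟨x, _, h⟩
  · exact h.2
  · simpa using h

theorem SC.ex {a : ℝ} {A : Set E} {u : E} (h : SC a A u) (ha : a ≠ 0) : ∃ x ∈ A, u = a • x := by
  rcases h with h | h
  · exact absurd h.1 ha
  · exact h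

theorem SC.add {A : Set E} (hA : Convex ℝ A) {a b t s : ℝ} {u v : E} (ha : 0 ≤ a) (hb : 0 ≤ b)
    (ht : 0 < t) (hs : 0 < s) (hu : SC a A u) (hv : SC b A v) :
    SC (t * a + s * b) A (t • u + s • v) := by
  rcases eq_or_lt_of_le ha with rfl | ha'
  · rw [hu.zero_of]
    rcases eq_or_lt_of_le hb with rfl | hb'
    · rw [hv.zero_of]; left; simp
    · obtain ⟨y, hy, rfl⟩ := hv.ex hb'.ne'
      right; exact ⟨y, hy, by simp [mul_smul]⟩
  · obtain ⟨x, hx, rfl⟩ := hu.ex ha'.ne'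
    rcases eq_or_lt_of_le hb with rfl | hb'
    · rw [hv.zero_of]
      right; exact ⟨x, hx, by simp [mul_smul]⟩
    · obtain ⟨y, hy, rfl⟩ := hv.ex hb'.ne'
      have h1 := mul_pos ht ha'
      have h2 := mul_pos hs hb'
      right
      refine ⟨(t * a / (t * a + s * b)) • x + (s * b / (t * a + s * b)) • y,
        hA hx hy (by positivity) (by positivity) (by field_simp), ?_⟩
      rw [smul_add, smul_smul, smul_smul, smul_smul, smul_smul]
      congr 2 <;> field_simp

theorem SC.mem {A : Set E} (hA : Convex ℝ A) (h0 : (0 : E) ∈ A) {a : ℝ} {u : E} (ha : 0 ≤ a)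
    (ha1 : a ≤ 1) (hu : SC a A u) : u ∈ A := by
  rcases hu with ⟨_, rfl⟩ | ⟨x, hx, rfl⟩
  · exact h0
  · exact hA.smul_mem_of_zero_mem h0 hx ⟨ha, ha1⟩

theorem SC.mono {A B : Set E} (h : A ⊆ B) {a : ℝ} {u : E} (hu : SC a A u) : SC a B u := by
  rcases hu with hu | ⟨x, hx, rfl⟩
  · exact Or.inl hu
  · exact Or.inr ⟨x, h hx, rfl⟩

theorem Glue_convex {A : Set E} {B : Set G} (hA : Convex ℝ A) (hB : Convex ℝ B) :
    Convex ℝ (Glue A B) := by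
  rw [convex_iff_openSegment_subset]
  rintro z ⟨a, b, ha, hb, hab, h1, h2⟩ z' ⟨a', b', ha', hb', hab', h1', h2'⟩ _ ⟨t, s, ht, hs, hts, rfl⟩
  refine ⟨t * a + s * a', t * b + s * b', by positivity, by positivity, ?_,
    SC.add hA ha ha' ht hs h1 h1', SC.add hB hb hb' ht hs h2 h2'⟩
  linear_combination t * hab + s * hab' + hts

theorem Glue_inl {A : Set E} {B : Set G} {x : E} (hx : x ∈ A) : (x, (0 : G)) ∈ Glue A B :=
  ⟨1, 0, by norm_num, by norm_num, by norm_num, Or.inr ⟨x, hx, by simp⟩, Or.inl ⟨rfl, rfl⟩⟩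

theorem Glue_inr {A : Set E} {B : Set G} {y : G} (hy : y ∈ B) : ((0 : E), y) ∈ Glue A B :=
  ⟨0, 1, by norm_num, by norm_num, by norm_num, Or.inl ⟨rfl, rfl⟩, Or.inr ⟨y, hy, by simp⟩⟩

open Classical in
/-- Vertex set of the join. -/
noncomputable def JJ (S : Finset E) (T : Finset G) : Finset (E × G) :=
  S.image (fun x => (x, (0 : G))) ∪ T.image (fun y => ((0 : E), y))

theorem mem_JJ {S : Finset E} {T : Finset G} {z : E × G} :
    z ∈ JJ S T ↔ (z.1 ∈ S ∧ z.2 = 0) ∨ (z.1 = 0 ∧ z.2 ∈ T) := by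
  obtain ⟨x, y⟩ := z
  simp [JJ, eq_comm]
  aesop

theorem hull_JJ (S : Finset E) (T : Finset G) :
    convexHull ℝ (JJ S T : Set (E × G)) = Glue (convexHull ℝ (S : Set E)) (convexHull ℝ (T : Set G)) := by
  apply Subset.antisymm
  · apply convexHull_min
    · rintro ⟨x, y⟩ h
      rw [Finset.mem_coe, mem_JJ] at h
      rcases h with ⟨h1, h2⟩ | ⟨h1, h2⟩
      · simp only at h1 h2
        subst h2
        exact Glue_inl (subset_convexHull ℝ _ h1)
      · simp only at h1 h2
        subst h1
        exact Glue_inr (subset_convexHull ℝ _ h2)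
    · exact Glue_convex (convex_convexHull ℝ _) (convex_convexHull ℝ _)
  · have hl : ∀ x ∈ convexHull ℝ (S : Set E), (x, (0 : G)) ∈ convexHull ℝ (JJ S T : Set (E × G)) := by
      intro x hx
      have h1 := (LinearMap.inl ℝ E G).image_convexHull (S : Set E)
      have h2 : (x, (0 : G)) ∈ LinearMap.inl ℝ E G '' convexHull ℝ (S : Set E) := ⟨x, hx, rfl⟩
      rw [h1] at h2
      refine convexHull_mono ?_ h2
      rintro _ ⟨s, hs, rfl⟩
      rw [Finset.mem_coe, mem_JJ]; left; exact ⟨hs, rfl⟩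
    have hr : ∀ y ∈ convexHull ℝ (T : Set G), ((0 : E), y) ∈ convexHull ℝ (JJ S T : Set (E × G)) := by
      intro x hx
      have h1 := (LinearMap.inr ℝ E G).image_convexHull (T : Set G)
      have h2 : ((0 : E), x) ∈ LinearMap.inr ℝ E G '' convexHull ℝ (T : Set G) := ⟨x, hx, rfl⟩
      rw [h1] at h2
      refine convexHull_mono ?_ h2
      rintro _ ⟨s, hs, rfl⟩
      rw [Finset.mem_coe, mem_JJ]; right; exact ⟨rfl, hs⟩
    rintro ⟨u, v⟩ ⟨a, b, ha, hb, hab, h1, h2⟩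
    simp only at h1 h2
    rcases eq_or_lt_of_le ha with rfl | ha'
    · rw [h1.zero_of]
      have hb1 : b = 1 := by linarith
      subst hb1
      obtain ⟨y, hy, rfl⟩ := h2.ex one_ne_zero
      rw [one_smul]; exact hr y hy
    · obtain ⟨x, hx, rfl⟩ := h1.ex ha'.ne'
      rcases eq_or_lt_of_le hb with rfl | hb'
      · rw [h2.zero_of]
        have hb1 : a = 1 := by linarith
        subst hb1
        rw [one_smul]; exact hl x hx
      · obtain ⟨y, hy, rfl⟩ := h2.ex hb'.ne'
        have := convex_convexHull ℝ _ (hl x hx) (hr y hy) ha hb hab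
        simpa using this

theorem SC.face {P F : Set E} (hF : IsExtreme ℝ P F) {a a' t t' : ℝ} {u u' : E}
    (ha : 0 ≤ a) (ha' : 0 ≤ a') (ht : 0 < t) (ht' : 0 < t') (hu : SC a P u) (hu' : SC a' P u')
    (h : SC (t * a + t' * a') F (t • u + t' • u')) : SC a F u := by
  rcases eq_or_lt_of_le ha with rfl | hap
  · left; exact ⟨rfl, hu.zero_of⟩
  · have hta := mul_pos ht hap
    have hta' := mul_nonneg ht'.le ha'
    have hpos : 0 < t * a + t' * a' := by linarith
    obtain ⟨p, hp, h⟩ := h.ex hpos.ne'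
    obtain ⟨x, hx, rfl⟩ := hu.ex hap.ne'
    right
    refine ⟨x, ?_, rfl⟩
    rcases eq_or_lt_of_le ha' with rfl | hap'
    · rw [hu'.zero_of] at h
      simp only [smul_zero, add_zero, mul_zero, smul_smul] at h
      have := smul_right_injective E hta.ne' h
      rw [this]; exact hp
    · obtain ⟨x', hx', rfl⟩ := hu'.ex hap'.ne'
      have htp' := mul_pos ht' hap'
      refine hF.2 hx hx' hp ⟨t * a / (t * a + t' * a'), t' * a' / (t * a + t' * a'),
        by positivity, by positivity, by field_simp, ?_⟩
      apply smul_right_injective E hpos.ne'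
      simp only
      rw [← h, smul_add, smul_smul, smul_smul, smul_smul, smul_smul]
      congr 2 <;> field_simp

theorem SC.le_of {P F : Set E} (hF : IsExtreme ℝ P F) (h0P : (0 : E) ∈ P) (h0 : (0 : E) ∉ F)
    {a c : ℝ} {u : E} (ha : 0 ≤ a) (hu : SC a P u) (hc : SC c F u) : c ≤ a := by
  by_contra! hlt
  have hcp : 0 < c := by linarith
  obtain ⟨p, hp, rfl⟩ := hc.ex hcp.ne'
  rcases eq_or_lt_of_le ha with rfl | hap
  · have := hu.zero_of
    rw [smul_eq_zero] at this
    rcases this with h | h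
    · exact hcp.ne' h
    · exact h0 (h ▸ hp)
  · obtain ⟨x, hx, h⟩ := hu.ex hap.ne'
    apply h0
    refine hF.2 h0P hx hp ⟨1 - a / c, a / c, ?_, by positivity, by ring, ?_⟩
    · rw [sub_pos, div_lt_one hcp]; exact hlt
    · apply smul_right_injective E hcp.ne'
      simp only
      rw [smul_zero, zero_add, h, smul_smul]
      congr 1; field_simp

theorem Glue_extreme {P F : Set E} {Q H : Set G} (hP : Convex ℝ P) (hQ : Convex ℝ Q)
    (h0P : (0 : E) ∈ P) (h0Q : (0 : G) ∈ Q)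
    (hF : IsExtreme ℝ P F) (hH : IsExtreme ℝ Q H) (hFc : Convex ℝ F) (hHc : Convex ℝ H)
    (h0 : (0 : E) ∈ F ↔ (0 : G) ∈ H) : IsExtreme ℝ (Glue P Q) (Glue F H) := by
  refine ⟨?_, ?_⟩
  · rintro z ⟨a, b, ha, hb, hab, h1, h2⟩
    exact ⟨a, b, ha, hb, hab, h1.mono hF.1, h2.mono hH.1⟩
  rintro z ⟨a, b, ha, hb, hab, h1, h2⟩ z' ⟨a', b', ha', hb', hab', h1', h2'⟩ _
    ⟨c, d, hc, hd, hcd, h3, h4⟩ ⟨t, t', ht, ht', htt, rfl⟩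
  simp only [Prod.fst_add, Prod.smul_fst, Prod.snd_add, Prod.smul_snd] at h3 h4
  by_cases h0F : (0 : E) ∈ F
  · have h0H := h0.1 h0F
    have m1 : z.1 ∈ F := hF.2 (h1.mem hP h0P ha (by linarith)) (h1'.mem hP h0P ha' (by linarith))
      (h3.mem hFc h0F hc (by linarith)) ⟨t, t', ht, ht', htt, rfl⟩
    have m2 : z.2 ∈ H := hH.2 (h2.mem hQ h0Q hb (by linarith)) (h2'.mem hQ h0Q hb' (by linarith))
      (h4.mem hHc h0H hd (by linarith)) ⟨t, t', ht, ht', htt, rfl⟩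
    refine ⟨a, b, ha, hb, hab, ?_, ?_⟩
    · rcases eq_or_lt_of_le ha with rfl | hap
      · left; exact ⟨rfl, h1.zero_of⟩
      · obtain ⟨x, hx, hxz⟩ := h1.ex hap.ne'
        right
        refine ⟨x, ?_, hxz⟩
        rcases eq_or_lt_of_le hb with rfl | hbp
        · have : a = 1 := by linarith
          rw [this, one_smul] at hxz; rw [← hxz]; exact m1
        · exact hF.2 hx h0P m1 ⟨a, b, hap, hbp, hab, by simp [hxz]⟩
    · rcases eq_or_lt_of_le hb with rfl | hbp
      · left; exact ⟨rfl, h2.zero_of⟩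
      · obtain ⟨x, hx, hxz⟩ := h2.ex hbp.ne'
        right
        refine ⟨x, ?_, hxz⟩
        rcases eq_or_lt_of_le ha with rfl | hap
        · have : b = 1 := by linarith
          rw [this, one_smul] at hxz; rw [← hxz]; exact m2
        · exact hH.2 hx h0Q m2 ⟨b, a, hbp, hap, by linarith, by simp [hxz]⟩
  · have h0H : (0 : G) ∉ H := fun h => h0F (h0.2 h)
    have l1 := SC.le_of hF h0P h0F (by positivity) (SC.add hP ha ha' ht ht' h1 h1') h3
    have l2 := SC.le_of hH h0Q h0H (by positivity) (SC.add hQ hb hb' ht ht' h2 h2') h4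
    have hs : (t * a + t' * a') + (t * b + t' * b') = 1 := by
      linear_combination t * hab + t' * hab' + htt
    have e1 : c = t * a + t' * a' := by linarith
    have e2 : d = t * b + t' * b' := by linarith
    subst e1 e2
    exact ⟨a, b, ha, hb, hab, SC.face hF ha ha' ht ht' h1 h1' h3,
      SC.face hH hb hb' ht ht' h2 h2' h4⟩

theorem SF.linInd {P : Set E} (h0P : (0 : E) ∈ P.extremePoints ℝ) {S : Finset E} (hS : S ∈ SF P) :
    LinInd S := by
  by_cases h0 : (0 : E) ∈ S
  · exact hS.1.linInd h0
  intro w hw s hs _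
  by_cases hW : ∑ s ∈ S, w s = 0
  · exact hS.1 w hW hw s hs
  exfalso
  apply h0
  set W := ∑ s ∈ S, w s with hWdef
  set v : E → ℝ := fun s => w s / W with hv
  have hv1 : ∑ s ∈ S, v s = 1 := by
    rw [hv, ← Finset.sum_div]; exact div_self hW
  have hv0 : ∑ s ∈ S, v s • s = 0 := by
    have : ∀ s, v s • s = W⁻¹ • (w s • s) := by
      intro s; rw [smul_smul, hv]; congr 1; field_simp
    simp only [this]
    rw [← Finset.smul_sum, hw, smul_zero]
  have hcard : 0 < (S.card : ℝ) := by
    have : 0 < S.card := Finset.card_pos.2 ⟨s, hs⟩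
    exact_mod_cast this
  set M : ℝ := 1 + ∑ s ∈ S, |v s| with hM
  have hMpos : 0 < M := by
    have : 0 ≤ ∑ s ∈ S, |v s| := Finset.sum_nonneg (fun _ _ => abs_nonneg _)
    linarith
  have hvM : ∀ s ∈ S, v s ≤ M := by
    intro s hs
    have := Finset.single_le_sum (f := fun s => |v s|) (fun _ _ => abs_nonneg _) hs
    have h2 := le_abs_self (v s)
    linarith
  set ε : ℝ := 1 / (S.card * M) with hε
  have hεpos : 0 < ε := by positivity
  set g : E := ∑ s ∈ S, (1 / (S.card : ℝ)) • s with hg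
  have hgm : g ∈ convexHull ℝ (S : Set E) := by
    rw [Finset.mem_convexHull']
    refine ⟨fun _ => 1 / (S.card : ℝ), fun _ _ => by positivity, ?_, rfl⟩
    rw [Finset.sum_const, nsmul_eq_mul]; field_simp
  have hg2 : (1 + ε) • g ∈ convexHull ℝ (S : Set E) := by
    rw [Finset.mem_convexHull']
    refine ⟨fun s => (1 + ε) * (1 / S.card) - ε * v s, ?_, ?_, ?_⟩
    · intro s hs
      have h1 : ε * v s ≤ ε * M := mul_le_mul_of_nonneg_left (hvM s hs) hεpos.le
      have h2 : ε * M = 1 / S.card := by rw [hε]; field_simp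
      have h3 : 0 ≤ ε * (1 / S.card) := by positivity
      have h4 : (1 + ε) * (1 / (S.card : ℝ)) = 1 / S.card + ε * (1 / S.card) := by ring
      simp only; rw [h4]; linarith
    · rw [Finset.sum_sub_distrib, ← Finset.mul_sum, ← Finset.mul_sum, hv1, Finset.sum_const,
        nsmul_eq_mul]
      field_simp; ring
    · have k1 : ∑ s ∈ S, ε • v s • s = 0 := by rw [← Finset.smul_sum, hv0, smul_zero]
      simp only [sub_smul, mul_smul]
      rw [Finset.sum_sub_distrib, k1, sub_zero, hg, Finset.smul_sum]
  refine mem_of_ext h0P hS.2.1 (hS.2.2 h0P.1 (hS.2.1 hg2) hgm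
    ⟨ε / (1 + ε), 1 / (1 + ε), by positivity, by positivity, by field_simp; ring, ?_⟩)
  rw [smul_zero, zero_add, smul_smul]
  have : 1 / (1 + ε) * (1 + ε) = 1 := by field_simp
  rw [this, one_smul]

theorem linInd_JJ {S : Finset E} {T : Finset G} (hS : LinInd S) (hT : LinInd T) :
    LinInd (JJ S T) := by
  classical
  intro w hw
  have h1 : ∑ x ∈ S, w (x, 0) • x = 0 := by
    have e := congrArg Prod.fst hw
    rw [Prod.fst_sum] at e
    simp only [Prod.smul_fst, Prod.fst_zero] at e
    have hsub : S.image (fun x => (x, (0 : G))) ⊆ JJ S T := by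
      intro z hz
      obtain ⟨x, hx, rfl⟩ := Finset.mem_image.1 hz
      exact mem_JJ.2 (Or.inl ⟨hx, rfl⟩)
    have e2 : ∑ x ∈ S, w (x, 0) • x
        = ∑ z ∈ S.image (fun x => (x, (0 : G))), w z • z.1 := by
      rw [Finset.sum_image (by intro x _ y _ h; simpa using h)]
    rw [e2, ← e]
    refine Finset.sum_subset hsub ?_
    intro z hz hz'
    rw [mem_JJ] at hz
    rcases hz with ⟨h1, h2⟩ | ⟨h1, h2⟩
    · exact absurd (Finset.mem_image.2 ⟨z.1, h1, by rw [← h2]⟩) hz'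
    · rw [h1, smul_zero]
  have h2 : ∑ y ∈ T, w (0, y) • y = 0 := by
    have e := congrArg Prod.snd hw
    rw [Prod.snd_sum] at e
    simp only [Prod.smul_snd, Prod.snd_zero] at e
    have hsub : T.image (fun x => ((0 : E), x)) ⊆ JJ S T := by
      intro z hz
      obtain ⟨x, hx, rfl⟩ := Finset.mem_image.1 hz
      exact mem_JJ.2 (Or.inr ⟨rfl, hx⟩)
    have e2 : ∑ x ∈ T, w (0, x) • x
        = ∑ z ∈ T.image (fun x => ((0 : E), x)), w z • z.2 := by
      rw [Finset.sum_image (by intro x _ y _ h; simpa using h)]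
    rw [e2, ← e]
    refine Finset.sum_subset hsub ?_
    intro z hz hz'
    rw [mem_JJ] at hz
    rcases hz with ⟨h1, h2⟩ | ⟨h1, h2⟩
    · rw [h2, smul_zero]
    · exact absurd (Finset.mem_image.2 ⟨z.2, h2, by rw [← h1]⟩) hz'
  rintro ⟨x, y⟩ hz hne
  rw [mem_JJ] at hz
  rcases hz with ⟨h3, h4⟩ | ⟨h3, h4⟩
  · simp only at h3 h4
    subst h4
    exact hS _ h1 x h3 (by rintro rfl; exact hne rfl)
  · simp only at h3 h4
    subst h3
    exact hT _ h2 y h4 (by rintro rfl; exact hne rfl)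

section
variable {P : Set E} {Q : Set G}

theorem JJ_mem_SF (hP : Convex ℝ P) (hQ : Convex ℝ Q)
    (h0P : (0 : E) ∈ P.extremePoints ℝ) (h0Q : (0 : G) ∈ Q.extremePoints ℝ)
    {S : Finset E} {T : Finset G} (hS : S ∈ SF P) (hT : T ∈ SF Q)
    (h0 : (0 : E) ∈ S ↔ (0 : G) ∈ T) : JJ S T ∈ SF (Glue P Q) := by
  refine ⟨(linInd_JJ (SF.linInd h0P hS) (SF.linInd h0Q hT)).affInd, ?_⟩
  rw [hull_JJ]
  refine Glue_extreme hP hQ h0P.1 h0Q.1 hS.2 hT.2 (convex_convexHull ℝ _) (convex_convexHull ℝ _) ?_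
  constructor
  · intro h; exact subset_convexHull ℝ _ (h0.1 (mem_of_ext h0P hS.2.1 h))
  · intro h; exact subset_convexHull ℝ _ (h0.2 (mem_of_ext h0Q hT.2.1 h))

theorem Glue_ext_cases (hP : Convex ℝ P) (hQ : Convex ℝ Q)
    (h0P : (0 : E) ∈ P.extremePoints ℝ) (h0Q : (0 : G) ∈ Q.extremePoints ℝ)
    {z : E × G} (hz : z ∈ (Glue P Q).extremePoints ℝ) :
    (z.1 ∈ P ∧ z.2 = 0) ∨ (z.1 = 0 ∧ z.2 ∈ Q) := by
  obtain ⟨⟨a, b, ha, hb, hab, h1, h2⟩, h⟩ := hz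
  have hzP := h1.mem hP h0P.1 ha (by linarith)
  have hzQ := h2.mem hQ h0Q.1 hb (by linarith)
  rcases eq_or_lt_of_le ha with rfl | hap
  · right; exact ⟨h1.zero_of, hzQ⟩
  rcases eq_or_lt_of_le hb with rfl | hbp
  · left; exact ⟨hzP, h2.zero_of⟩
  obtain ⟨x, hx, hxz⟩ := h1.ex hap.ne'
  obtain ⟨y, hy, hyz⟩ := h2.ex hbp.ne'
  have := h (Glue_inl hx) (Glue_inr hy) ⟨a, b, hap, hbp, hab, by
    apply Prod.ext
    · simp [hxz]
    · simp [hyz]⟩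
  left
  rw [← this]; exact ⟨hx, rfl⟩

theorem face_inl (hP : Convex ℝ P) (hQ : Convex ℝ Q)
    (h0P : (0 : E) ∈ P.extremePoints ℝ) (h0Q : (0 : G) ∈ Q.extremePoints ℝ)
    : IsExtreme ℝ (Glue P Q) {z | z.1 ∈ P ∧ z.2 = 0} := by
  refine ⟨?_, ?_⟩
  · rintro ⟨x, y⟩ ⟨h1, h2⟩
    simp only at h1 h2
    subst h2; exact Glue_inl h1
  · rintro z ⟨a, b, ha, hb, hab, h1, h2⟩ z' ⟨a', b', ha', hb', hab', h1', h2'⟩ u ⟨hu1, hu2⟩ h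
    refine ⟨h1.mem hP h0P.1 ha (by linarith), ?_⟩
    have h3 := openSegment_snd h
    rw [hu2] at h3
    exact h0Q.2 (h2.mem hQ h0Q.1 hb (by linarith)) (h2'.mem hQ h0Q.1 hb' (by linarith)) h3

theorem face_inr (hP : Convex ℝ P) (hQ : Convex ℝ Q)
    (h0P : (0 : E) ∈ P.extremePoints ℝ) (h0Q : (0 : G) ∈ Q.extremePoints ℝ)
    : IsExtreme ℝ (Glue P Q) {z | z.1 = 0 ∧ z.2 ∈ Q} := by
  refine ⟨?_, ?_⟩
  · rintro ⟨x, y⟩ ⟨h1, h2⟩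
    simp only at h1 h2
    subst h1; exact Glue_inr h2
  · rintro z ⟨a, b, ha, hb, hab, h1, h2⟩ z' ⟨a', b', ha', hb', hab', h1', h2'⟩ u ⟨hu1, hu2⟩ h
    refine ⟨?_, h2.mem hQ h0Q.1 hb (by linarith)⟩
    have h3 := openSegment_fst h
    rw [hu1] at h3
    exact h0P.2 (h1.mem hP h0P.1 ha (by linarith)) (h1'.mem hP h0P.1 ha' (by linarith)) h3

theorem SF_Glue_cases (hP : Convex ℝ P) (hQ : Convex ℝ Q)
    (h0P : (0 : E) ∈ P.extremePoints ℝ) (h0Q : (0 : G) ∈ Q.extremePoints ℝ)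
    {S : Finset (E × G)} (hS : S ∈ SF (Glue P Q)) :
    ∃ A ∈ SF P, ∃ B ∈ SF Q, ((0 : E) ∈ A ↔ (0 : G) ∈ B) ∧ S = JJ A B := by
  classical
  set A : Finset E := (S.filter (fun z => z.2 = 0)).image Prod.fst with hA
  set B : Finset G := (S.filter (fun z => z.1 = 0)).image Prod.snd with hB
  have mA : ∀ x, x ∈ A ↔ (x, (0 : G)) ∈ S := by
    intro x; simp [hA]
  have mB : ∀ y, y ∈ B ↔ ((0 : E), y) ∈ S := by
    intro x; simp [hB]
  have hSe : S = JJ A B := by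
    ext ⟨x, y⟩
    rw [mem_JJ, mA, mB]
    simp only
    constructor
    · intro h
      rcases Glue_ext_cases hP hQ h0P h0Q (SF.ext hS h) with ⟨_, h2⟩ | ⟨h1, _⟩
      · left; simp only at h2; subst h2; exact ⟨h, rfl⟩
      · right; simp only at h1; subst h1; exact ⟨rfl, h⟩
    · rintro (⟨h, rfl⟩ | ⟨rfl, h⟩) <;> exact h
  refine ⟨A, ⟨?_, ?_⟩, B, ⟨?_, ?_⟩, ?_, hSe⟩
  · have h1 := hS.1.mono (T := A.image (fun x => (x, (0 : G)))) (by
      intro z hz; obtain ⟨x, hx, rfl⟩ := Finset.mem_image.1 hz; exact (mA x).1 hx)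
    have : A.image (fun x => (x, (0 : G))) = A ×ˢ {0} := by
      ext ⟨x, y⟩; simp [eq_comm]
    rw [this] at h1
    exact affInd_right.1 h1
  · have hsub : convexHull ℝ (A : Set E) ⊆ P := convexHull_min (by
      intro x hx
      obtain ⟨a, b, ha, hb, hab, h1, h2⟩ := SF.subset hS ((mA x).1 hx)
      exact h1.mem hP h0P.1 ha (by linarith)) hP
    refine ⟨hsub, ?_⟩
    rintro x hx y hy z hz ⟨a, b, ha, hb, hab, rfl⟩
    have h1 : (x, (0 : G)) ∈ convexHull ℝ (S : Set (E × G)) := by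
      refine hS.2.2 (y := (y, 0)) (z := (a • x + b • y, 0)) (Glue_inl hx) (Glue_inl hy) ?_
        ⟨a, b, ha, hb, hab, by simp⟩
      rw [hSe, hull_JJ]; exact Glue_inl hz
    have h2 := hull_inter_face (face_inl hP hQ h0P h0Q) hS.2.1 h1 ⟨hx, rfl⟩
    have h3 := mem_image_of_mem (LinearMap.fst ℝ E G) h2
    rw [LinearMap.image_convexHull] at h3
    refine convexHull_mono ?_ h3
    rintro _ ⟨⟨u, v⟩, ⟨hu, hu2⟩, rfl⟩
    have : v = 0 := hu2.2
    subst this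
    exact (mA u).2 hu
  · have h1 := hS.1.mono (T := B.image (fun x => ((0 : E), x))) (by
      intro z hz; obtain ⟨x, hx, rfl⟩ := Finset.mem_image.1 hz; exact (mB x).1 hx)
    have : B.image (fun x => ((0 : E), x)) = {0} ×ˢ B := by
      ext ⟨x, y⟩; simp [eq_comm]
    rw [this] at h1
    exact affInd_left.1 h1
  · have hsub : convexHull ℝ (B : Set G) ⊆ Q := convexHull_min (by
      intro x hx
      obtain ⟨a, b, ha, hb, hab, h1, h2⟩ := SF.subset hS ((mB x).1 hx)
      exact h2.mem hQ h0Q.1 hb (by linarith)) hQ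
    refine ⟨hsub, ?_⟩
    rintro x hx y hy z hz ⟨a, b, ha, hb, hab, rfl⟩
    have h1 : ((0 : E), x) ∈ convexHull ℝ (S : Set (E × G)) := by
      refine hS.2.2 (y := (0, y)) (z := (0, a • x + b • y)) (Glue_inr hx) (Glue_inr hy) ?_
        ⟨a, b, ha, hb, hab, by simp⟩
      rw [hSe, hull_JJ]; exact Glue_inr hz
    have h2 := hull_inter_face (face_inr hP hQ h0P h0Q) hS.2.1 h1 ⟨rfl, hx⟩
    have h3 := mem_image_of_mem (LinearMap.snd ℝ E G) h2
    rw [LinearMap.image_convexHull] at h3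
    refine convexHull_mono ?_ h3
    rintro _ ⟨⟨u, v⟩, ⟨hu, hu2⟩, rfl⟩
    have : u = 0 := hu2.1
    subst this
    exact (mB v).2 hu
  · rw [mA, mB]

end
end glue

section genfun
open Polynomial

/-- A polynomial with nonnegative coefficients. -/
def NN (p : ℤ[X]) : Prop := ∀ n, 0 ≤ p.coeff n

theorem NN.add {p q : ℤ[X]} (hp : NN p) (hq : NN q) : NN (p + q) := by
  intro n; rw [coeff_add]; exact add_nonneg (hp n) (hq n)

theorem NN.mul {p q : ℤ[X]} (hp : NN p) (hq : NN q) : NN (p * q) := by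
  intro n; rw [coeff_mul]; exact Finset.sum_nonneg (fun x _ => mul_nonneg (hp _) (hq _))

theorem NN_X_pow (k : ℕ) : NN (X ^ k : ℤ[X]) := by
  intro n; rw [coeff_X_pow]; split_ifs <;> simp

theorem NN_X : NN (X : ℤ[X]) := by simpa using NN_X_pow 1

theorem NN_sum {ι : Type*} (s : Finset ι) (f : ι → ℕ) : NN (∑ x ∈ s, (X : ℤ[X]) ^ f x) := by
  intro n
  rw [finsetSum_coeff]
  exact Finset.sum_nonneg (fun x _ => NN_X_pow _ n)

theorem NN_of_inj {ι κ : Type*} {s : Finset ι} {t : Finset κ} {f : ι → ℕ} {g : κ → ℕ}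
    (φ : ι → κ) (h1 : ∀ x ∈ s, φ x ∈ t) (h2 : InjOn φ s) (h3 : ∀ x ∈ s, g (φ x) = f x) :
    NN (∑ x ∈ t, (X : ℤ[X]) ^ g x - ∑ x ∈ s, (X : ℤ[X]) ^ f x) := by
  classical
  have e : ∑ x ∈ s, (X : ℤ[X]) ^ f x = ∑ y ∈ s.image φ, (X : ℤ[X]) ^ g y := by
    rw [Finset.sum_image h2]
    exact Finset.sum_congr rfl (fun x hx => by rw [h3 x hx])
  rw [e, ← Finset.sum_sdiff (s₁ := s.image φ) (s₂ := t) (by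
    intro y hy; obtain ⟨x, hx, rfl⟩ := Finset.mem_image.1 hy; exact h1 x hx)]
  rw [add_sub_cancel_right]
  exact NN_sum _ _

theorem coeff_sum_pow {ι : Type*} (s : Finset ι) (f : ι → ℕ) (n : ℕ) :
    (∑ x ∈ s, (X : ℤ[X]) ^ f x).coeff n = ((s.filter (fun x => f x = n)).card : ℤ) := by
  rw [finsetSum_coeff, Finset.card_filter]
  push_cast
  refine Finset.sum_congr rfl (fun x _ => ?_)
  rw [coeff_X_pow]
  simp [eq_comm]

/-- Counting faces through the origin. -/
noncomputable def N0 (P : Set E) (n : ℕ) : ℕ := {S | S ∈ SF P ∧ (0 : E) ∈ S ∧ S.card = n}.ncard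

open Classical in
/-- generating function of faces through the origin -/
noncomputable def gA (P : Set E) (h : (SF P).Finite) : ℤ[X] :=
  ∑ S ∈ h.toFinset.filter (fun S => (0 : E) ∈ S), (X : ℤ[X]) ^ (S.card - 1)

open Classical in
/-- generating function of faces avoiding the origin -/
noncomputable def gB (P : Set E) (h : (SF P).Finite) : ℤ[X] :=
  ∑ S ∈ h.toFinset.filter (fun S => (0 : E) ∉ S), (X : ℤ[X]) ^ S.card

/-- generating function of all simplex faces -/
noncomputable def gN (P : Set E) (h : (SF P).Finite) : ℤ[X] :=
  ∑ S ∈ h.toFinset, (X : ℤ[X]) ^ S.card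

theorem coeff_gN (P : Set E) (h : (SF P).Finite) (n : ℕ) : (gN P h).coeff n = NS P n := by
  rw [gN, coeff_sum_pow, NS, ← Set.ncard_coe_finset]
  congr 2
  ext S; simp

theorem coeff_gA (P : Set E) (h : (SF P).Finite) (n : ℕ) : (gA P h).coeff n = N0 P (n + 1) := by
  rw [gA, coeff_sum_pow, N0, ← Set.ncard_coe_finset]
  congr 2
  ext S
  simp only [Finset.coe_filter, Finset.mem_filter, Finite.mem_toFinset, mem_ofPred_eq, and_assoc]
  refine and_congr_right fun _ => and_congr_right fun h0 => ?_
  have := Finset.card_pos.2 ⟨_, h0⟩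
  omega

theorem gN_eq (P : Set E) (h : (SF P).Finite) : gN P h = X * gA P h + gB P h := by
  classical
  rw [gN, gA, gB, ← Finset.sum_filter_add_sum_filter_not _ (fun S : Finset E => (0 : E) ∈ S),
    Finset.mul_sum]
  congr 1
  refine Finset.sum_congr (by congr) (fun S hS => ?_)
  have := Finset.card_pos.2 ⟨_, (Finset.mem_filter.1 hS).2⟩
  rw [← pow_succ']
  congr 1; omega

theorem gB_sub_gA (P : Set E) (h : (SF P).Finite) : NN (gB P h - gA P h) := by
  classical
  rw [gA, gB]
  refine NN_of_inj (fun S => S.erase 0) ?_ ?_ ?_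
  · intro S hS
    simp only [Finset.mem_filter, Finite.mem_toFinset] at hS ⊢
    exact ⟨SF.mono hS.1 (Finset.erase_subset _ _), by simp⟩
  · intro S hS T hT hST
    simp only [Finset.coe_filter, Finite.mem_toFinset, mem_ofPred_eq] at hS hT
    simp only at hST
    rw [← Finset.insert_erase hS.2, hST, Finset.insert_erase hT.2]
  · intro S hS
    simp only [Finset.mem_filter, Finite.mem_toFinset] at hS
    exact Finset.card_erase_of_mem hS.2

theorem gN_NN (P : Set E) (h : (SF P).Finite) : NN (gN P h) := NN_sum _ _
theorem gB_NN (P : Set E) (h : (SF P).Finite) : NN (gB P h) := NN_sum _ _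

section
variable {G : Type*} [AddCommGroup G] [Module ℝ G]

theorem zero_mem_JJ {S : Finset E} {T : Finset G} :
    (0 : E × G) ∈ JJ S T ↔ (0 : E) ∈ S ∨ (0 : G) ∈ T := by
  rw [mem_JJ]; simp

theorem JJ_inj {S S' : Finset E} {T T' : Finset G} (h : (0 : E) ∈ S ↔ (0 : G) ∈ T)
    (h' : (0 : E) ∈ S' ↔ (0 : G) ∈ T') (e : JJ S T = JJ S' T') : S = S' ∧ T = T' := by
  have m : ∀ (S : Finset E) (T : Finset G), ((0 : E) ∈ S ↔ (0 : G) ∈ T) →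
      (∀ x, x ∈ S ↔ (x, (0 : G)) ∈ JJ S T) ∧ (∀ y, y ∈ T ↔ ((0 : E), y) ∈ JJ S T) := by
    intro S T h
    constructor
    · intro x; rw [mem_JJ]; simp only
      constructor
      · intro h; exact Or.inl ⟨h, trivial⟩
      · rintro (⟨h, _⟩ | ⟨rfl, h1⟩)
        · exact h
        · exact h.2 h1
    · intro x; rw [mem_JJ]; simp only
      constructor
      · intro h; exact Or.inr ⟨trivial, h⟩
      · rintro (⟨h1, rfl⟩ | ⟨_, h1⟩)
        · exact h.1 h1
        · exact h1
  constructor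
  · ext x; rw [(m S T h).1, (m S' T' h').1, e]
  · ext x; rw [(m S T h).2, (m S' T' h').2, e]

theorem card_JJ_not {S : Finset E} {T : Finset G} (h : (0 : E) ∉ S) :
    (JJ S T).card = S.card + T.card := by
  classical
  have : JJ S T = S.image (fun x => (x, (0 : G))) ∪ T.image (fun y => ((0 : E), y)) := by
    ext z; rw [mem_JJ]; obtain ⟨x, y⟩ := z; simp [eq_comm]; aesop
  rw [this, Finset.card_union_of_disjoint, Finset.card_image_of_injective,
    Finset.card_image_of_injective]
  · intro a b h; simpa using h
  · intro a b h; simpa using h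
  · rw [Finset.disjoint_left]
    rintro ⟨x, y⟩ h1 h2
    obtain ⟨a, ha, e⟩ := Finset.mem_image.1 h1
    obtain ⟨b, hb, e'⟩ := Finset.mem_image.1 h2
    have : a = 0 := by rw [← e'] at e; simpa using congrArg Prod.fst e
    exact h (this ▸ ha)

theorem card_JJ_mem {S : Finset E} {T : Finset G} (h : (0 : E) ∈ S) (h' : (0 : G) ∈ T) :
    (JJ S T).card = (S.card - 1) + (T.card - 1) + 1 := by
  classical
  have e : JJ S T = JJ (S.erase 0) T := by
    ext ⟨x, y⟩
    simp only [mem_JJ, Finset.mem_erase]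
    constructor
    · rintro (⟨h1, rfl⟩ | h1)
      · by_cases hx : x = 0
        · right; exact ⟨hx, h'⟩
        · left; exact ⟨⟨hx, h1⟩, rfl⟩
      · exact Or.inr h1
    · rintro (⟨h1, rfl⟩ | h1)
      · exact Or.inl ⟨h1.2, rfl⟩
      · exact Or.inr h1
  rw [e, card_JJ_not (by simp), Finset.card_erase_of_mem h]
  have := Finset.card_pos.2 ⟨_, h'⟩
  omega

variable {P : Set E} {Q : Set G}

theorem SF_Glue_finite (hP : Convex ℝ P) (hQ : Convex ℝ Q)
    (h0P : (0 : E) ∈ P.extremePoints ℝ) (h0Q : (0 : G) ∈ Q.extremePoints ℝ)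
    (fP : (SF P).Finite) (fQ : (SF Q).Finite) : (SF (Glue P Q)).Finite := by
  refine ((fP.prod fQ).image (fun p => JJ p.1 p.2)).subset ?_
  intro S hS
  obtain ⟨A, hA, B, hB, _, rfl⟩ := SF_Glue_cases hP hQ h0P h0Q hS
  exact ⟨(A, B), ⟨hA, hB⟩, rfl⟩

theorem gN_Glue (hP : Convex ℝ P) (hQ : Convex ℝ Q)
    (h0P : (0 : E) ∈ P.extremePoints ℝ) (h0Q : (0 : G) ∈ Q.extremePoints ℝ)
    (fP : (SF P).Finite) (fQ : (SF Q).Finite) (fG : (SF (Glue P Q)).Finite) :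
    gN (Glue P Q) fG = X * (gA P fP * gA Q fQ) + gB P fP * gB Q fQ := by
  classical
  rw [gN_eq]
  congr 1
  · congr 1
    rw [gA, gA, gA, Finset.sum_mul_sum, ← Finset.sum_product']
    symm
    refine Finset.sum_nbij (fun p => JJ p.1 p.2) ?_ ?_ ?_ ?_
    · rintro ⟨S, T⟩ h
      simp only [Finset.mem_product, Finset.mem_filter, Finite.mem_toFinset] at h ⊢
      exact ⟨JJ_mem_SF hP hQ h0P h0Q h.1.1 h.2.1 (by simp [h.1.2, h.2.2]),
        zero_mem_JJ.2 (Or.inl h.1.2)⟩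
    · rintro ⟨S, T⟩ h ⟨S', T'⟩ h' e
      simp only [Finset.mem_coe, Finset.mem_product, Finset.mem_filter, Finite.mem_toFinset] at h h' e
      obtain ⟨h1, h2⟩ := JJ_inj (by simp [h.1.2, h.2.2]) (by simp [h'.1.2, h'.2.2]) e
      rw [h1, h2]
    · intro S hS
      simp only [Finset.mem_coe, Finset.mem_filter, Finite.mem_toFinset] at hS
      obtain ⟨A, hA, B, hB, h0, rfl⟩ := SF_Glue_cases hP hQ h0P h0Q hS.1
      have := zero_mem_JJ.1 hS.2
      refine ⟨(A, B), ?_, rfl⟩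
      simp only [Finset.mem_coe, Finset.mem_product, Finset.mem_filter, Finite.mem_toFinset]
      tauto
    · rintro ⟨S, T⟩ h
      simp only [Finset.mem_product, Finset.mem_filter, Finite.mem_toFinset] at h ⊢
      rw [card_JJ_mem h.1.2 h.2.2, ← pow_add]; simp
  · rw [gB, gB, gB, Finset.sum_mul_sum, ← Finset.sum_product']
    symm
    refine Finset.sum_nbij (fun p => JJ p.1 p.2) ?_ ?_ ?_ ?_
    · rintro ⟨S, T⟩ h
      simp only [Finset.mem_product, Finset.mem_filter, Finite.mem_toFinset] at h ⊢
      refine ⟨JJ_mem_SF hP hQ h0P h0Q h.1.1 h.2.1 (by simp [h.1.2, h.2.2]), ?_⟩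
      rw [zero_mem_JJ]; tauto
    · rintro ⟨S, T⟩ h ⟨S', T'⟩ h' e
      simp only [Finset.mem_coe, Finset.mem_product, Finset.mem_filter, Finite.mem_toFinset] at h h' e
      obtain ⟨h1, h2⟩ := JJ_inj (by simp [h.1.2, h.2.2]) (by simp [h'.1.2, h'.2.2]) e
      rw [h1, h2]
    · intro S hS
      simp only [Finset.mem_coe, Finset.mem_filter, Finite.mem_toFinset] at hS
      obtain ⟨A, hA, B, hB, h0, rfl⟩ := SF_Glue_cases hP hQ h0P h0Q hS.1
      have := hS.2
      rw [zero_mem_JJ] at this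
      refine ⟨(A, B), ?_, rfl⟩
      simp only [Finset.mem_coe, Finset.mem_product, Finset.mem_filter, Finite.mem_toFinset]
      tauto
    · rintro ⟨S, T⟩ h
      simp only [Finset.mem_product, Finset.mem_filter, Finite.mem_toFinset] at h ⊢
      rw [card_JJ_not h.1.2, ← pow_add]

theorem NS_Glue_le {E' G' : Type*} [AddCommGroup E'] [Module ℝ E'] [AddCommGroup G'] [Module ℝ G']
    {P' : Set E'} {Q' : Set G'} (hP : Convex ℝ P) (hQ : Convex ℝ Q)
    (h0P : (0 : E) ∈ P.extremePoints ℝ) (h0Q : (0 : G) ∈ Q.extremePoints ℝ)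
    (fP : (SF P).Finite) (fQ : (SF Q).Finite)
    (hP' : Convex ℝ P') (hQ' : Convex ℝ Q')
    (h0P' : (0 : E') ∈ P'.extremePoints ℝ) (h0Q' : (0 : G') ∈ Q'.extremePoints ℝ)
    (fP' : (SF P').Finite) (fQ' : (SF Q').Finite)
    (h1 : ∀ n, NS P n ≤ NS P' n) (h2 : ∀ n, NS Q n ≤ NS Q' n)
    (h3 : ∀ n, N0 P' n ≤ N0 P n) (h4 : ∀ n, N0 Q' n ≤ N0 Q n) (n : ℕ) :
    NS (Glue P Q) n ≤ NS (Glue P' Q') n := by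
  have fG := SF_Glue_finite hP hQ h0P h0Q fP fQ
  have fG' := SF_Glue_finite hP' hQ' h0P' h0Q' fP' fQ'
  have dP : NN (gN P' fP' - gN P fP) := by
    intro n; rw [coeff_sub, coeff_gN, coeff_gN]; have := h1 n; omega
  have dQ : NN (gN Q' fQ' - gN Q fQ) := by
    intro n; rw [coeff_sub, coeff_gN, coeff_gN]; have := h2 n; omega
  have eP : NN (gA P fP - gA P' fP') := by
    intro n; rw [coeff_sub, coeff_gA, coeff_gA]; have := h3 (n + 1); omega
  have eQ : NN (gA Q fQ - gA Q' fQ') := by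
    intro n; rw [coeff_sub, coeff_gA, coeff_gA]; have := h4 (n + 1); omega
  have key : NN (gN (Glue P' Q') fG' - gN (Glue P Q) fG) := by
    rw [gN_Glue hP hQ h0P h0Q fP fQ, gN_Glue hP' hQ' h0P' h0Q' fP' fQ']
    have bP := gB_NN P fP
    have bQ := gB_NN Q fQ
    have cP := gB_sub_gA P fP
    have cQ := gB_sub_gA Q fQ
    rw [gN_eq, gN_eq] at dP dQ
    generalize gA P fP = A at *
    generalize gA Q fQ = A' at *
    generalize gA P' fP' = a at *
    generalize gA Q' fQ' = a' at *
    generalize gB P fP = B at *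
    generalize gB Q fQ = B' at *
    generalize gB P' fP' = b at *
    generalize gB Q' fQ' = b' at *
    have e : X * (a * a') + b * b' - (X * (A * A') + B * B') =
        X * (A - a) * (B' - A') + X * (A' - a') * (B - A) + X * (A - a) * (A' - a')
        + B * (X * a' + b' - (X * A' + B')) + B' * (X * a + b - (X * A + B))
        + ((X * a + b - (X * A + B)) + X * (A - a)) * ((X * a' + b' - (X * A' + B')) + X * (A' - a')) := by
      ring
    rw [e]
    exact ((((((NN_X.mul eP).mul cQ).add ((NN_X.mul eQ).mul cP)).add ((NN_X.mul eP).mul eQ)).add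
      (bP.mul dQ)).add (bQ.mul dP)).add ((dP.add (NN_X.mul eP)).mul (dQ.add (NN_X.mul eQ)))
  have := key n
  rw [coeff_sub, coeff_gN, coeff_gN] at this
  omega

end
end genfun

section polys
variable {α : Type*} [PartialOrder α]

theorem order_convex : Convex ℝ (orderPolytope α) := by
  rintro x ⟨h1, h2⟩ y ⟨h3, h4⟩ a b ha hb hab
  refine ⟨fun p => ⟨?_, ?_⟩, fun p q hpq => ?_⟩
  · have := mul_nonneg ha (h1 p).1
    have := mul_nonneg hb (h3 p).1
    simp only [Pi.add_apply, Pi.smul_apply, smul_eq_mul]; linarith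
  · have := mul_le_mul_of_nonneg_left (h1 p).2 ha
    have := mul_le_mul_of_nonneg_left (h3 p).2 hb
    simp only [Pi.add_apply, Pi.smul_apply, smul_eq_mul]; linarith
  · have := mul_le_mul_of_nonneg_left (h2 p q hpq) ha
    have := mul_le_mul_of_nonneg_left (h4 p q hpq) hb
    simp only [Pi.add_apply, Pi.smul_apply, smul_eq_mul]; linarith

theorem chain_convex : Convex ℝ (chainPolytope α) := by
  rintro x ⟨h1, h2⟩ y ⟨h3, h4⟩ a b ha hb hab
  refine ⟨fun p => ?_, fun s hs => ?_⟩
  · have := mul_nonneg ha (h1 p)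
    have := mul_nonneg hb (h3 p)
    simp only [Pi.add_apply, Pi.smul_apply, smul_eq_mul]; linarith
  · have := mul_le_mul_of_nonneg_left (h2 s hs) ha
    have := mul_le_mul_of_nonneg_left (h4 s hs) hb
    simp only [Pi.add_apply, Pi.smul_apply, smul_eq_mul, Finset.sum_add_distrib, ← Finset.mul_sum]
    linarith

theorem zero_of_comb {a b u v : ℝ} (ha : 0 < a) (hb : 0 < b) (hu : 0 ≤ u) (hv : 0 ≤ v)
    (h : a * u + b * v = 0) : u = 0 := by
  have h1 := mul_nonneg ha.le hu
  have h2 := mul_nonneg hb.le hv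
  have h3 : a * u = 0 := by linarith
  rcases mul_eq_zero.1 h3 with h | h
  · exact absurd h ha.ne'
  · exact h

theorem zero_ext_of_nonneg {ι : Type*} {P : Set (ι → ℝ)} (h0 : (0 : ι → ℝ) ∈ P)
    (h : ∀ x ∈ P, ∀ i, 0 ≤ x i) : (0 : ι → ℝ) ∈ P.extremePoints ℝ := by
  refine ⟨h0, ?_⟩
  rintro x hx y hy ⟨a, b, ha, hb, hab, e⟩
  funext i
  have := congrFun e i
  simp only [Pi.add_apply, Pi.smul_apply, smul_eq_mul, Pi.zero_apply] at this
  exact zero_of_comb ha hb (h x hx i) (h y hy i) this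

theorem order_zero_ext : (0 : α → ℝ) ∈ (orderPolytope α).extremePoints ℝ := by
  refine zero_ext_of_nonneg ⟨fun p => by simp, fun p q _ => by simp⟩ (fun x hx i => (hx.1 i).1)

theorem chain_zero_ext : (0 : α → ℝ) ∈ (chainPolytope α).extremePoints ℝ := by
  refine zero_ext_of_nonneg ⟨fun p => by simp, fun s _ => by simp⟩ (fun x hx i => hx.1 i)

theorem ext_zero_one {ι : Type*} {F : Set (ι → ℝ)} {x : ι → ℝ} (hx : x ∈ F.extremePoints ℝ)
    (h1 : (fun p => x p ^ 2) ∈ F) (h2 : (fun p => 2 * x p - x p ^ 2) ∈ F) (p : ι) :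
    x p = 0 ∨ x p = 1 := by
  have := hx.2 h1 h2 ⟨1/2, 1/2, by norm_num, by norm_num, by norm_num, by
    funext q
    simp only [Pi.add_apply, Pi.smul_apply, smul_eq_mul]; ring⟩
  have := congrFun this p
  have h3 : x p * (x p - 1) = 0 := by linear_combination this
  rcases mul_eq_zero.1 h3 with h | h
  · exact Or.inl h
  · right; linarith

theorem order_sq {x : α → ℝ} (hx : x ∈ orderPolytope α) : (fun p => x p ^ 2) ∈ orderPolytope α := by
  refine ⟨fun p => ⟨by positivity, ?_⟩, fun p q hpq => ?_⟩
  · have := hx.1 p; simp only; nlinarith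
  · exact pow_le_pow_left₀ (hx.1 p).1 (hx.2 p q hpq) 2

theorem order_sq' {x : α → ℝ} (hx : x ∈ orderPolytope α) :
    (fun p => 2 * x p - x p ^ 2) ∈ orderPolytope α := by
  refine ⟨fun p => ⟨?_, ?_⟩, fun p q hpq => ?_⟩
  · have := hx.1 p; simp only; nlinarith
  · simp only; nlinarith [sq_nonneg (x p - 1)]
  · have h1 := hx.1 p
    have h2 := hx.1 q
    have h3 := hx.2 p q hpq
    simp only; nlinarith

theorem order_SF_finite [Finite α] : (SF (orderPolytope α)).Finite := by
  apply SF_finite_of_ext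
  refine (Set.Finite.pi' (t := fun _ : α => ({0, 1} : Set ℝ)) (fun _ => by simp)).subset ?_
  intro x hx p
  exact ext_zero_one hx (order_sq hx.1) (order_sq' hx.1) p

theorem chain_down {x y : α → ℝ} (hy : y ∈ chainPolytope α) (h0 : ∀ p, 0 ≤ x p)
    (h : ∀ p, x p ≤ y p) : x ∈ chainPolytope α :=
  ⟨h0, fun s hs => (Finset.sum_le_sum (fun p _ => h p)).trans (hy.2 s hs)⟩

theorem chain_le_one {y : α → ℝ} (hy : y ∈ chainPolytope α) (p : α) : y p ≤ 1 := by
  simpa using hy.2 {p} (by simp)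

variable [DecidableEq α]

theorem single_mem_chain (p : α) : (Pi.single p 1 : α → ℝ) ∈ chainPolytope α := by
  refine ⟨fun q => ?_, fun s _ => ?_⟩
  · rw [Pi.single_apply]; split_ifs <;> simp
  · rw [Finset.sum_pi_single']; split_ifs <;> simp

theorem single_ext_chain (p : α) : (Pi.single p 1 : α → ℝ) ∈ (chainPolytope α).extremePoints ℝ := by
  refine ⟨single_mem_chain p, ?_⟩
  rintro x hx y hy ⟨a, b, ha, hb, hab, e⟩
  funext q
  have := congrFun e q
  simp only [Pi.add_apply, Pi.smul_apply, smul_eq_mul] at this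
  by_cases hq : q = p
  · subst hq
    simp only [Pi.single_eq_same] at this ⊢
    have := zero_of_comb ha hb (u := 1 - x q) (v := 1 - y q)
      (by linarith [chain_le_one hx q]) (by linarith [chain_le_one hy q])
      (by linear_combination hab - this)
    linarith
  · rw [Pi.single_eq_of_ne hq] at this ⊢
    exact zero_of_comb ha hb (hx.1 q) (hy.1 q) this

theorem single_inj {p q : α} (h : (Pi.single p 1 : α → ℝ) = Pi.single q 1) : p = q := by
  by_contra hne
  have := congrFun h p
  rw [Pi.single_eq_same, Pi.single_eq_of_ne hne] at this
  exact one_ne_zero this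

theorem single_ne {p : α} : (Pi.single p 1 : α → ℝ) ≠ 0 := by
  intro h
  have := congrFun h p
  simp at this

section
variable {S : Finset (α → ℝ)}

theorem face_single (hS : S ∈ SF (chainPolytope α)) (h0 : (0 : α → ℝ) ∈ S)
    {s : α → ℝ} (hs : s ∈ S) {p : α} (hp : s p ≠ 0) : (Pi.single p 1 : α → ℝ) ∈ S := by
  have hsC := SF.subset hS hs
  have hpos : 0 < s p := lt_of_le_of_ne (hsC.1 p) (Ne.symm hp)
  have hle := chain_le_one hsC p
  have hu : (Pi.single p (s p) : α → ℝ) ∈ chainPolytope α := by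
    refine chain_down hsC (fun q => ?_) (fun q => ?_)
    · rw [Pi.single_apply]; split_ifs <;> simp [hpos.le]
    · rw [Pi.single_apply]; split_ifs with h
      · rw [h]
      · exact hsC.1 q
  have hv : s - (Pi.single p (s p) : α → ℝ) ∈ chainPolytope α := by
    refine chain_down hsC (fun q => ?_) (fun q => ?_)
    · rw [Pi.sub_apply, Pi.single_apply]; split_ifs with h
      · rw [h]; simp
      · simpa using hsC.1 q
    · rw [Pi.sub_apply, Pi.single_apply]; split_ifs with h
      · linarith
      · simp
  have m0 := subset_convexHull ℝ (S : Set (α → ℝ)) h0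
  have ms := subset_convexHull ℝ (S : Set (α → ℝ)) hs
  have mh : (1/2 : ℝ) • s ∈ convexHull ℝ (S : Set (α → ℝ)) := by
    have := convex_convexHull ℝ (S : Set (α → ℝ)) ms m0 (a := 1/2) (b := 1/2) (by norm_num)
      (by norm_num) (by norm_num)
    simpa using this
  have h1 : (Pi.single p (s p) : α → ℝ) ∈ convexHull ℝ (S : Set (α → ℝ)) := by
    refine hS.2.2 hu hv mh ⟨1/2, 1/2, by norm_num, by norm_num, by norm_num, ?_⟩
    rw [← smul_add, add_sub_cancel]
  refine mem_of_ext (single_ext_chain p) hS.2.1 ?_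
  rcases eq_or_lt_of_le hle with h | h
  · rw [h] at h1; exact h1
  · refine hS.2.2 (single_mem_chain p) chain_zero_ext.1 h1
      ⟨s p, 1 - s p, hpos, by linarith, by ring, ?_⟩
    funext q
    by_cases hq : q = p
    · subst hq; simp
    · simp [Pi.single_eq_of_ne hq]

theorem face_eq_single [Fintype α] (hS : S ∈ SF (chainPolytope α)) (h0 : (0 : α → ℝ) ∈ S)
    {s : α → ℝ} (hs : s ∈ S) (hne : s ≠ 0) : ∃ p, s = Pi.single p 1 := by
  classical
  have hl := hS.1.linInd h0
  have := hl (fun t => (if t = s then 1 else 0) - ∑ p, if t = Pi.single p 1 then s p else 0) ?_ s hs hne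
  · by_contra hcon
    push Not at hcon
    simp [hcon] at this
  · simp only [sub_smul, Finset.sum_sub_distrib, ite_smul, one_smul, zero_smul, Finset.sum_ite_eq',
      hs, if_true, Finset.sum_smul]
    rw [Finset.sum_comm, sub_eq_zero]
    have : ∀ p, ∑ t ∈ S, (if t = Pi.single p 1 then s p • t else 0) = Pi.single p (s p) := by
      intro p
      rw [Finset.sum_ite_eq']
      by_cases hp : s p = 0
      · simp [hp]
      · rw [if_pos (face_single hS h0 hs hp)]
        funext q
        by_cases hq : q = p
        · subst hq; simp
        · simp [Pi.single_eq_of_ne hq]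
    simp only [this]
    rw [Finset.univ_sum_single]

theorem face_chain [Fintype α] (hS : S ∈ SF (chainPolytope α)) (h0 : (0 : α → ℝ) ∈ S) {p q : α}
    (hp : (Pi.single p 1 : α → ℝ) ∈ S) (hq : (Pi.single q 1 : α → ℝ) ∈ S) : p ≤ q ∨ q ≤ p := by
  by_contra! hcon
  have hne : p ≠ q := by rintro rfl; exact hcon.1 le_rfl
  have mC : (Pi.single p 1 + Pi.single q 1 : α → ℝ) ∈ chainPolytope α := by
    refine ⟨fun r => add_nonneg ((single_mem_chain p).1 r) ((single_mem_chain q).1 r), ?_⟩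
    intro s hs
    simp only [Pi.add_apply, Finset.sum_add_distrib, Finset.sum_pi_single']
    by_cases h1 : p ∈ s
    · by_cases h2 : q ∈ s
      · rcases hs.total h1 h2 with h | h
        · exact absurd h hcon.1
        · exact absurd h hcon.2
      · simp [h1, h2]
    · split_ifs <;> simp
  have h1 : (1/2 : ℝ) • (Pi.single p 1 : α → ℝ) + (1/2 : ℝ) • Pi.single q 1
      ∈ convexHull ℝ (S : Set (α → ℝ)) :=
    convex_convexHull ℝ _ (subset_convexHull ℝ _ hp) (subset_convexHull ℝ _ hq) (by norm_num)
      (by norm_num) (by norm_num)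
  have h2 := hS.2.2 mC chain_zero_ext.1 h1 ⟨1/2, 1/2, by norm_num, by norm_num, by norm_num, by
    rw [smul_zero, add_zero, smul_add]⟩
  have h3 : convexHull ℝ (S : Set (α → ℝ)) ⊆ {x | ∑ r, x r ≤ 1} := by
    apply convexHull_min
    · intro s hs
      by_cases hz : s = 0
      · simp [hz]
      · obtain ⟨r, rfl⟩ := face_eq_single hS h0 hs hz
        simp
    · rintro x hx y hy a b ha hb hab
      have := mul_le_mul_of_nonneg_left hx ha
      have := mul_le_mul_of_nonneg_left hy hb
      simp only [mem_ofPred_eq, Pi.add_apply, Pi.smul_apply, smul_eq_mul, Finset.sum_add_distrib,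
        ← Finset.mul_sum]
      linarith
  have h4 := h3 h2
  simp only [mem_ofPred_eq, Pi.add_apply, Finset.sum_add_distrib, Finset.sum_pi_single'] at h4
  simp at h4
  norm_num at h4
end

end polys

section TK
variable {α : Type*} [PartialOrder α]

/-- indicator of a principal filter -/
noncomputable def up (k : α) : α → ℝ := chi (Ici k)

theorem up_of_le {k p : α} (h : k ≤ p) : up k p = 1 := by
  simp [up, chi, h]

theorem up_of_not {k p : α} (h : ¬ k ≤ p) : up k p = 0 := by
  simp [up, chi, h]

theorem up_inj {k l : α} (h : up k = up l) : k = l := by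
  apply le_antisymm
  · by_contra hc
    have := congrFun h l
    rw [up_of_not hc, up_of_le le_rfl] at this
    exact zero_ne_one this
  · by_contra hc
    have := congrFun h k
    rw [up_of_not hc, up_of_le le_rfl] at this
    exact zero_ne_one this.symm

theorem up_ne (k : α) : up k ≠ 0 := by
  intro h
  have := congrFun h k
  rw [up_of_le le_rfl] at this
  exact one_ne_zero this

open Classical in
/-- vertex set of the simplex at the origin associated with a chain -/
noncomputable def TK (K : Finset α) : Finset (α → ℝ) := insert 0 (K.image up)

theorem card_TK (K : Finset α) : (TK K).card = K.card + 1 := by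
  classical
  rw [TK, Finset.card_insert_of_notMem, Finset.card_image_of_injective]
  · intro a b h; exact up_inj h
  · intro h
    obtain ⟨k, _, e⟩ := Finset.mem_image.1 h
    exact up_ne k e

theorem mem_TK {K : Finset α} {k : α} : up k ∈ TK K ↔ k ∈ K := by
  classical
  rw [TK, Finset.mem_insert, Finset.mem_image]
  constructor
  · rintro (h | ⟨l, hl, e⟩)
    · exact absurd h (up_ne k)
    · rw [← up_inj e]; exact hl
  · intro h; exact Or.inr ⟨k, h, rfl⟩

theorem linInd_TK [Finite α] (K : Finset α) : LinInd (TK K) := by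
  classical
  intro w hw
  have h1 : ∑ k ∈ K, w (up k) • up k = 0 := by
    rw [TK, Finset.sum_insert, Finset.sum_image (fun a _ b _ h => up_inj h)] at hw
    · simpa using hw
    · intro h
      obtain ⟨k, _, e⟩ := Finset.mem_image.1 h
      exact up_ne k e
  have h2 : ∀ k : α, k ∈ K → w (up k) = 0 := by
    intro k
    induction k using WellFoundedLT.induction with
    | ind k ih =>
      intro hk
      have e := congrFun h1 k
      rw [Finset.sum_apply, Finset.sum_eq_single k] at e
      · simpa [up_of_le le_rfl] using e
      · intro l hl hlk
        by_cases h : l ≤ k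
        · simp [ih l (lt_of_le_of_ne h hlk) hl]
        · simp [up_of_not h]
      · intro h; exact absurd hk h
  intro s hs hne
  rw [TK, Finset.mem_insert, Finset.mem_image] at hs
  rcases hs with h | ⟨k, hk, rfl⟩
  · exact absurd h hne
  · exact h2 k hk

/-- face of the order polytope associated with a chain -/
def FK (K : Finset α) : Set (α → ℝ) :=
  {x | x ∈ orderPolytope α ∧ (∀ p, (∀ k ∈ K, ¬ k ≤ p) → x p = 0) ∧
    (∀ k ∈ K, ∀ p, k ≤ p → (∀ k' ∈ K, k' ≤ p → k' ≤ k) → x p = x k)}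

theorem FK_extreme (K : Finset α) : IsExtreme ℝ (orderPolytope α) (FK K) := by
  refine ⟨fun x hx => hx.1, ?_⟩
  rintro x hx y hy z ⟨hz, h1, h2⟩ ⟨a, b, ha, hb, hab, rfl⟩
  refine ⟨hx, fun p hp => ?_, fun k hk p hkp hm => ?_⟩
  · exact zero_of_comb ha hb (hx.1 p).1 (hy.1 p).1 (h1 p hp)
  · have := h2 k hk p hkp hm
    simp only [Pi.add_apply, Pi.smul_apply, smul_eq_mul] at this
    have := zero_of_comb ha hb (sub_nonneg.2 (hx.2 k p hkp)) (sub_nonneg.2 (hy.2 k p hkp))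
      (by linear_combination this)
    linarith

theorem FK_convex (K : Finset α) : Convex ℝ (FK K) := by
  rintro x ⟨hx, h1, h2⟩ y ⟨hy, h3, h4⟩ a b ha hb hab
  refine ⟨order_convex hx hy ha hb hab, fun p hp => ?_, fun k hk p hkp hm => ?_⟩
  · simp [h1 p hp, h3 p hp]
  · simp [h2 k hk p hkp hm, h4 k hk p hkp hm]

theorem FK_compact (K : Finset α) : IsCompact (FK K) := by
  have hc : IsClosed (FK K) := by
    have e : FK K = (⋂ p, {x | 0 ≤ x p}) ∩ (⋂ p, {x | x p ≤ 1}) ∩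
        (⋂ p, ⋂ q, ⋂ (_ : p ≤ q), {x | x p ≤ x q}) ∩
        (⋂ p, ⋂ (_ : ∀ k ∈ K, ¬ k ≤ p), {x | x p = 0}) ∩
        (⋂ k, ⋂ (_ : k ∈ K), ⋂ p, ⋂ (_ : k ≤ p), ⋂ (_ : ∀ k' ∈ K, k' ≤ p → k' ≤ k),
          {x | x p = x k}) := by
      ext x
      simp only [FK, orderPolytope, mem_inter_iff, mem_iInter, mem_ofPred_eq, forall_and]
      tauto
    rw [e]
    refine (((IsClosed.inter ?_ ?_).inter ?_).inter ?_).inter ?_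
    · exact isClosed_iInter fun p => isClosed_le continuous_const (continuous_apply p)
    · exact isClosed_iInter fun p => isClosed_le (continuous_apply p) continuous_const
    · exact isClosed_iInter fun p => isClosed_iInter fun q => isClosed_iInter fun _ =>
        isClosed_le (continuous_apply p) (continuous_apply q)
    · exact isClosed_iInter fun p => isClosed_iInter fun _ =>
        isClosed_eq (continuous_apply p) continuous_const
    · exact isClosed_iInter fun k => isClosed_iInter fun _ => isClosed_iInter fun p =>
        isClosed_iInter fun _ => isClosed_iInter fun _ =>
        isClosed_eq (continuous_apply p) (continuous_apply k)
  refine (isCompact_univ_pi (fun _ : α => isCompact_Icc (a := (0:ℝ)) (b := 1))).of_isClosed_subset hc ?_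
  intro x hx p _
  exact hx.1.1 p

theorem chain_max {K : Finset α} (hK : IsChain (· ≤ ·) (K : Set α)) (p : α)
    (h : ∃ k ∈ K, k ≤ p) : ∃ k ∈ K, k ≤ p ∧ ∀ k' ∈ K, k' ≤ p → k' ≤ k := by
  classical
  obtain ⟨k0, hk0, hp0⟩ := h
  obtain ⟨k, hk⟩ := (K.filter (fun k => k ≤ p)).exists_maximal ⟨k0, by simp [hk0, hp0]⟩
  have h1 := Finset.mem_filter.1 hk.1
  refine ⟨k, h1.1, h1.2, fun k' hk' hp' => ?_⟩
  rcases hK.total hk' h1.1 with h | h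
  · exact h
  · exact hk.2 (Finset.mem_filter.2 ⟨hk', hp'⟩) h

theorem FK_ext {K : Finset α} (hK : IsChain (· ≤ ·) (K : Set α)) :
    (FK K).extremePoints ℝ ⊆ (TK K : Set (α → ℝ)) := by
  classical
  intro x hx
  have hxF := hx.1
  have h01 := ext_zero_one hx
    ⟨order_sq hxF.1, fun p hp => by simp [hxF.2.1 p hp],
      fun k hk p hkp hm => by simp only; rw [hxF.2.2 k hk p hkp hm]⟩
    ⟨order_sq' hxF.1, fun p hp => by simp [hxF.2.1 p hp],
      fun k hk p hkp hm => by simp only; rw [hxF.2.2 k hk p hkp hm]⟩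
  have key : ∀ p, x p = 1 → ∃ k ∈ K, k ≤ p ∧ x k = 1 := by
    intro p hp
    have : ∃ k ∈ K, k ≤ p := by
      by_contra! hc
      rw [hxF.2.1 p hc] at hp
      exact zero_ne_one hp
    obtain ⟨k, hk, hkp, hm⟩ := chain_max hK p this
    exact ⟨k, hk, hkp, by rw [← hxF.2.2 k hk p hkp hm, hp]⟩
  rw [Finset.mem_coe, TK, Finset.mem_insert, Finset.mem_image]
  by_cases hz : x = 0
  · exact Or.inl hz
  right
  obtain ⟨p, hp⟩ := Function.ne_iff.1 hz
  obtain ⟨k1, hk1, _, hx1⟩ := key p ((h01 p).resolve_left hp)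
  obtain ⟨k, hk⟩ := (K.filter (fun k => x k = 1)).exists_minimal ⟨k1, by simp [hk1, hx1]⟩
  have hkm := Finset.mem_filter.1 hk.1
  refine ⟨k, hkm.1, ?_⟩
  funext q
  by_cases h : k ≤ q
  · rw [up_of_le h]
    have := hxF.1.2 k q h
    have := (hxF.1.1 q).2
    linarith [hkm.2]
  · rw [up_of_not h]
    rcases h01 q with h' | h'
    · exact h'.symm
    · exfalso
      obtain ⟨l, hl, hlq, hxl⟩ := key q h'
      apply h
      rcases hK.total hkm.1 hl with h2 | h2
      · exact h2.trans hlq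
      · exact (hk.2 (Finset.mem_filter.2 ⟨hl, hxl⟩) h2).trans hlq

theorem up_mem_order (k : α) : up k ∈ orderPolytope α := by
  refine ⟨fun p => ?_, fun p q hpq => ?_⟩
  · by_cases h : k ≤ p
    · rw [up_of_le h]; norm_num
    · rw [up_of_not h]; norm_num
  · by_cases h : k ≤ p
    · rw [up_of_le h, up_of_le (h.trans hpq)]
    · rw [up_of_not h]
      by_cases h : k ≤ q
      · rw [up_of_le h]; norm_num
      · rw [up_of_not h]

theorem TK_sub_FK (K : Finset α) : (TK K : Set (α → ℝ)) ⊆ FK K := by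
  classical
  intro x hx
  rw [Finset.mem_coe, TK, Finset.mem_insert, Finset.mem_image] at hx
  rcases hx with rfl | ⟨k, hk, rfl⟩
  · exact ⟨order_zero_ext.1, fun _ _ => rfl, fun _ _ _ _ _ => rfl⟩
  · refine ⟨up_mem_order k, fun p hp => up_of_not (hp k hk), fun l hl p hlp hm => ?_⟩
    by_cases h : k ≤ p
    · rw [up_of_le h, up_of_le (hm k hk h)]
    · rw [up_of_not h, up_of_not (fun h' => h (h'.trans hlp))]

theorem TK_mem_SF [Finite α] {K : Finset α} (hK : IsChain (· ≤ ·) (K : Set α)) :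
    TK K ∈ SF (orderPolytope α) := by
  refine ⟨(linInd_TK K).affInd, ?_⟩
  have : convexHull ℝ (TK K : Set (α → ℝ)) = FK K := by
    apply Subset.antisymm
    · exact convexHull_min (TK_sub_FK K) (FK_convex K)
    · conv_lhs => rw [← closure_convexHull_extremePoints (FK_compact K) (FK_convex K)]
      exact closure_minimal (convexHull_mono (FK_ext hK))
        ((TK K).finite_toSet.isClosed_convexHull ℝ)
  rw [this]
  exact FK_extreme K

theorem N0_chain_le [Finite α] (n : ℕ) : N0 (chainPolytope α) n ≤ N0 (orderPolytope α) n := by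
  classical
  have := Fintype.ofFinite α
  set κ : Finset (α → ℝ) → Finset α := fun S => Finset.univ.filter (fun p => (Pi.single p 1 : α → ℝ) ∈ S)
    with hκ
  have hmem : ∀ S p, p ∈ κ S ↔ (Pi.single p 1 : α → ℝ) ∈ S := by intro S p; simp [hκ]
  have hS : ∀ S ∈ SF (chainPolytope α), (0 : α → ℝ) ∈ S →
      S = insert 0 ((κ S).image (fun p => (Pi.single p 1 : α → ℝ))) := by
    intro S hS h0
    ext s
    rw [Finset.mem_insert, Finset.mem_image]
    constructor
    · intro hs
      by_cases hz : s = 0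
      · exact Or.inl hz
      · obtain ⟨p, rfl⟩ := face_eq_single hS h0 hs hz
        exact Or.inr ⟨p, (hmem S p).2 hs, rfl⟩
    · rintro (rfl | ⟨p, hp, rfl⟩)
      · exact h0
      · exact (hmem S p).1 hp
  refine Set.ncard_le_ncard_of_injOn (fun S => TK (κ S)) ?_ ?_
    (order_SF_finite.subset (fun S hS => hS.1))
  · rintro S ⟨h1, h2, h3⟩
    refine ⟨TK_mem_SF ?_, by simp [TK], ?_⟩
    · intro p hp q hq _
      exact face_chain h1 h2 ((hmem S p).1 hp) ((hmem S q).1 hq)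
    · rw [card_TK, ← h3]
      conv_rhs => rw [hS S h1 h2]
      rw [Finset.card_insert_of_notMem, Finset.card_image_of_injective]
      · intro a b h; exact single_inj h
      · intro h
        obtain ⟨k, _, e⟩ := Finset.mem_image.1 h
        exact single_ne e
  · rintro S ⟨h1, h2, h3⟩ S' ⟨h1', h2', h3'⟩ e
    have : κ S = κ S' := by
      ext p
      simp only at e
      rw [← mem_TK, e, mem_TK]
    rw [hS S h1 h2, this, ← hS S' h1' h2']

end TK

section sums

theorem image_eq_of_iff {X Y : Type*} (e : X ≃ Y) {P : Set X} {Q : Set Y}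
    (h : ∀ x, e x ∈ Q ↔ x ∈ P) : e '' P = Q := by
  ext y
  constructor
  · rintro ⟨x, hx, rfl⟩; exact (h x).2 hx
  · intro hy
    refine ⟨e.symm y, (h _).1 (by simpa using hy), by simp⟩

variable {α β : Type*} [PartialOrder α] [PartialOrder β]

/-- splitting coordinates -/
noncomputable def eSum (α β : Type*) : (α ⊕ β → ℝ) ≃ᵃ[ℝ] (α → ℝ) × (β → ℝ) :=
  (LinearEquiv.sumArrowLequivProdArrow α β ℝ ℝ).toAffineEquiv

theorem eSum_order : eSum α β '' orderPolytope (α ⊕ β) = orderPolytope α ×ˢ orderPolytope β := by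
  apply image_eq_of_iff (eSum α β).toEquiv
  intro z
  constructor
  · rintro ⟨⟨h1, h2⟩, ⟨h3, h4⟩⟩
    refine ⟨?_, ?_⟩
    · rintro (p | p)
      · exact h1 p
      · exact h3 p
    · rintro (p | p) (q | q) hpq
      · exact h2 p q (Sum.inl_le_inl_iff.1 hpq)
      · exact absurd hpq Sum.not_inl_le_inr
      · exact absurd hpq Sum.not_inr_le_inl
      · exact h4 p q (Sum.inr_le_inr_iff.1 hpq)
  · rintro ⟨h1, h2⟩
    exact ⟨⟨fun p => h1 _, fun p q h => h2 _ _ (Sum.inl_le_inl_iff.2 h)⟩,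
      ⟨fun p => h1 _, fun p q h => h2 _ _ (Sum.inr_le_inr_iff.2 h)⟩⟩

theorem eSum_chain : eSum α β '' chainPolytope (α ⊕ β) = chainPolytope α ×ˢ chainPolytope β := by
  apply image_eq_of_iff (eSum α β).toEquiv
  intro z
  constructor
  · rintro ⟨⟨h1, h2⟩, ⟨h3, h4⟩⟩
    refine ⟨?_, ?_⟩
    · rintro (p | p)
      · exact h1 p
      · exact h3 p
    · intro s hs
      rw [Finset.sum_sum_eq_sum_toLeft_add_sum_toRight]
      have c1 : IsChain (· ≤ ·) (s.toLeft : Set α) := by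
        intro p hp q hq _
        rcases hs.total (Finset.mem_toLeft.1 hp) (Finset.mem_toLeft.1 hq) with h | h
        · exact Or.inl (Sum.inl_le_inl_iff.1 h)
        · exact Or.inr (Sum.inl_le_inl_iff.1 h)
      have c2 : IsChain (· ≤ ·) (s.toRight : Set β) := by
        intro p hp q hq _
        rcases hs.total (Finset.mem_toRight.1 hp) (Finset.mem_toRight.1 hq) with h | h
        · exact Or.inl (Sum.inr_le_inr_iff.1 h)
        · exact Or.inr (Sum.inr_le_inr_iff.1 h)
      rcases s.toLeft.eq_empty_or_nonempty with he | ⟨p, hp⟩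
      · rw [he, Finset.sum_empty, zero_add]
        exact h4 _ c2
      · have : s.toRight = ∅ := by
          rw [Finset.eq_empty_iff_forall_notMem]
          intro q hq
          rcases hs.total (Finset.mem_toLeft.1 hp) (Finset.mem_toRight.1 hq) with h | h
          · exact Sum.not_inl_le_inr h
          · exact Sum.not_inr_le_inl h
        rw [this, Finset.sum_empty, add_zero]
        exact h2 _ c1
  · rintro ⟨h1, h2⟩
    refine ⟨⟨fun p => h1 _, fun s hs => ?_⟩, ⟨fun p => h1 _, fun s hs => ?_⟩⟩
    · have := h2 (s.map Function.Embedding.inl) (by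
        intro p hp q hq _
        simp only [Finset.coe_map, mem_image, Function.Embedding.inl_apply] at hp hq
        obtain ⟨p, hp, rfl⟩ := hp
        obtain ⟨q, hq, rfl⟩ := hq
        rcases hs.total hp hq with h | h
        · exact Or.inl (Sum.inl_le_inl_iff.2 h)
        · exact Or.inr (Sum.inl_le_inl_iff.2 h))
      rw [Finset.sum_map] at this
      exact this
    · have := h2 (s.map Function.Embedding.inr) (by
        intro p hp q hq _
        simp only [Finset.coe_map, mem_image, Function.Embedding.inr_apply] at hp hq
        obtain ⟨p, hp, rfl⟩ := hp
        obtain ⟨q, hq, rfl⟩ := hq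
        rcases hs.total hp hq with h | h
        · exact Or.inl (Sum.inr_le_inr_iff.2 h)
        · exact Or.inr (Sum.inr_le_inr_iff.2 h))
      rw [Finset.sum_map] at this
      exact this

theorem SC_chain_iff {a : ℝ} (ha : 0 ≤ a) (u : α → ℝ) : SC a (chainPolytope α) u ↔
    (∀ p, 0 ≤ u p) ∧ ∀ s : Finset α, IsChain (· ≤ ·) (s : Set α) → ∑ p ∈ s, u p ≤ a := by
  constructor
  · rintro (⟨rfl, rfl⟩ | ⟨x, hx, rfl⟩)
    · simp
    · refine ⟨fun p => mul_nonneg ha (hx.1 p), fun s hs => ?_⟩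
      simp only [Pi.smul_apply, smul_eq_mul, ← Finset.mul_sum]
      have := mul_le_mul_of_nonneg_left (hx.2 s hs) ha
      linarith
  · rintro ⟨h1, h2⟩
    rcases eq_or_lt_of_le ha with rfl | ha'
    · left
      refine ⟨rfl, funext fun p => le_antisymm ?_ (h1 p)⟩
      simpa using h2 {p} (by simp)
    · right
      refine ⟨a⁻¹ • u, ⟨fun p => ?_, fun s hs => ?_⟩, ?_⟩
      · exact mul_nonneg (by positivity) (h1 p)
      · simp only [Pi.smul_apply, smul_eq_mul, ← Finset.mul_sum]
        rw [inv_mul_le_iff₀ ha', mul_one]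
        exact h2 s hs
      · rw [smul_smul, mul_inv_cancel₀ ha'.ne', one_smul]

theorem SC_order_iff {a : ℝ} (ha : 0 ≤ a) (u : α → ℝ) : SC a (orderPolytope α) u ↔
    (∀ p, 0 ≤ u p ∧ u p ≤ a) ∧ ∀ p q, p ≤ q → u p ≤ u q := by
  constructor
  · rintro (⟨rfl, rfl⟩ | ⟨x, hx, rfl⟩)
    · simp
    · refine ⟨fun p => ⟨mul_nonneg ha (hx.1 p).1, ?_⟩, fun p q hpq =>
        mul_le_mul_of_nonneg_left (hx.2 p q hpq) ha⟩
      have := mul_le_mul_of_nonneg_left (hx.1 p).2 ha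
      simp only [Pi.smul_apply, smul_eq_mul]; linarith
  · rintro ⟨h1, h2⟩
    rcases eq_or_lt_of_le ha with rfl | ha'
    · left
      exact ⟨rfl, funext fun p => le_antisymm (h1 p).2 (h1 p).1⟩
    · right
      refine ⟨a⁻¹ • u, ⟨fun p => ⟨?_, ?_⟩, fun p q hpq => ?_⟩, ?_⟩
      · exact mul_nonneg (by positivity) (h1 p).1
      · simp only [Pi.smul_apply, smul_eq_mul]
        rw [inv_mul_le_iff₀ ha', mul_one]
        exact (h1 p).2
      · exact mul_le_mul_of_nonneg_left (h2 p q hpq) (by positivity)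
      · rw [smul_smul, mul_inv_cancel₀ ha'.ne', one_smul]

/-- splitting coordinates of an ordinal sum -/
noncomputable def eLex (α β : Type*) : (α ⊕ₗ β → ℝ) ≃ᵃ[ℝ] (α → ℝ) × (β → ℝ) :=
  (LinearEquiv.funCongrLeft ℝ ℝ (toLex : α ⊕ β ≃ α ⊕ₗ β)).toAffineEquiv.trans (eSum α β)

theorem eLex_fst (z : α ⊕ₗ β → ℝ) (p : α) : (eLex α β z).1 p = z (toLex (Sum.inl p)) := rfl
theorem eLex_snd (z : α ⊕ₗ β → ℝ) (p : β) : (eLex α β z).2 p = z (toLex (Sum.inr p)) := rfl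

theorem eLex_chain [Finite α] :
    eLex α β '' chainPolytope (α ⊕ₗ β) = Glue (chainPolytope α) (chainPolytope β) := by
  classical
  apply image_eq_of_iff (eLex α β).toEquiv
  intro z
  have := Fintype.ofFinite α
  constructor
  · rintro ⟨a, b, ha, hb, hab, h1, h2⟩
    rw [SC_chain_iff ha] at h1
    rw [SC_chain_iff hb] at h2
    refine ⟨?_, ?_⟩
    · rintro (p | p)
      · exact h1.1 p
      · exact h2.1 p
    · intro s hs
      have e : ∑ p ∈ s, z p = ∑ p ∈ s.map ofLex.toEmbedding, z (toLex p) := by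
        rw [Finset.sum_map]; rfl
      rw [e, Finset.sum_sum_eq_sum_toLeft_add_sum_toRight]
      have c1 : IsChain (· ≤ ·) ((s.map ofLex.toEmbedding).toLeft : Set α) := by
        intro p hp q hq _
        simp only [Finset.mem_coe, Finset.mem_toLeft, Finset.mem_map_equiv] at hp hq
        rcases hs.total hp hq with h | h
        · exact Or.inl (Sum.Lex.inl_le_inl_iff.1 h)
        · exact Or.inr (Sum.Lex.inl_le_inl_iff.1 h)
      have c2 : IsChain (· ≤ ·) ((s.map ofLex.toEmbedding).toRight : Set β) := by
        intro p hp q hq _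
        simp only [Finset.mem_coe, Finset.mem_toRight, Finset.mem_map_equiv] at hp hq
        rcases hs.total hp hq with h | h
        · exact Or.inl (Sum.Lex.inr_le_inr_iff.1 h)
        · exact Or.inr (Sum.Lex.inr_le_inr_iff.1 h)
      have := add_le_add (h1.2 _ c1) (h2.2 _ c2)
      rw [hab] at this
      exact this
  · rintro ⟨h1, h2⟩
    obtain ⟨s0, hs0, hmax⟩ := Finset.exists_max_image
      ((Finset.univ : Finset α).powerset.filter (fun s : Finset α => IsChain (· ≤ ·) (s : Set α)))
      (fun s : Finset α => ∑ p ∈ s, z (toLex (Sum.inl p))) ⟨∅, by simp⟩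
    have hs0c := (Finset.mem_filter.1 hs0).2
    have ha0 : 0 ≤ ∑ p ∈ s0, z (toLex (Sum.inl p)) := Finset.sum_nonneg (fun p _ => h1 _)
    have key : ∀ t : Finset β, IsChain (· ≤ ·) (t : Set β) →
        ∑ p ∈ s0, z (toLex (Sum.inl p)) + ∑ q ∈ t, z (toLex (Sum.inr q)) ≤ 1 := by
      intro t ht
      have := h2 ((s0.disjSum t).map toLex.toEmbedding) (by
        intro p hp q hq _
        simp only [Finset.mem_coe, Finset.mem_map_equiv] at hp hq
        obtain ⟨p, rfl⟩ := toLex.surjective p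
        obtain ⟨q, rfl⟩ := toLex.surjective q
        rcases p with p | p <;> rcases q with q | q
        · rcases hs0c.total (Finset.inl_mem_disjSum.1 hp) (Finset.inl_mem_disjSum.1 hq) with h | h
          · exact Or.inl (Sum.Lex.inl_le_inl_iff.2 h)
          · exact Or.inr (Sum.Lex.inl_le_inl_iff.2 h)
        · exact Or.inl (Sum.Lex.inl_le_inr _ _)
        · exact Or.inr (Sum.Lex.inl_le_inr _ _)
        · rcases ht.total (Finset.inr_mem_disjSum.1 hp) (Finset.inr_mem_disjSum.1 hq) with h | h
          · exact Or.inl (Sum.Lex.inr_le_inr_iff.2 h)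
          · exact Or.inr (Sum.Lex.inr_le_inr_iff.2 h))
      rw [Finset.sum_map, Finset.sum_disjSum] at this
      exact this
    have hb0 : 0 ≤ 1 - ∑ p ∈ s0, z (toLex (Sum.inl p)) := by
      have := key ∅ (by simp); simp at this; linarith
    refine ⟨_, 1 - ∑ p ∈ s0, z (toLex (Sum.inl p)), ha0, hb0, by ring, ?_, ?_⟩
    · rw [SC_chain_iff ha0]
      exact ⟨fun p => h1 _, fun s hs => hmax s (by simp [hs])⟩
    · rw [SC_chain_iff hb0]
      refine ⟨fun p => h1 _, fun t ht => ?_⟩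
      have := key t ht
      exact le_sub_iff_add_le'.2 this

/-- order-reversing reflection -/
noncomputable def eDual (β : Type*) : (β → ℝ) ≃ᵃ[ℝ] (βᵒᵈ → ℝ) :=
  (LinearEquiv.funCongrLeft ℝ ℝ (OrderDual.ofDual : βᵒᵈ ≃ β)).toAffineEquiv.trans
    (AffineEquiv.constVSub ℝ (fun _ => 1))

theorem eDual_apply (x : β → ℝ) (p : βᵒᵈ) : eDual β x p = 1 - x (OrderDual.ofDual p) := rfl

theorem eDual_order : eDual β '' orderPolytope β = orderPolytope βᵒᵈ := by
  apply image_eq_of_iff (eDual β).toEquiv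
  intro z
  constructor
  · rintro ⟨h1, h2⟩
    refine ⟨fun p => ?_, fun p q hpq => ?_⟩
    · have := h1 (OrderDual.toDual p)
      change 0 ≤ 1 - z p ∧ 1 - z p ≤ 1 at this
      constructor <;> linarith
    · have := h2 (OrderDual.toDual q) (OrderDual.toDual p) hpq
      change 1 - z q ≤ 1 - z p at this
      linarith
  · rintro ⟨h1, h2⟩
    refine ⟨fun p => ?_, fun p q hpq => ?_⟩
    · have := h1 (OrderDual.ofDual p)
      change 0 ≤ 1 - z (OrderDual.ofDual p) ∧ 1 - z (OrderDual.ofDual p) ≤ 1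
      constructor <;> linarith
    · have := h2 (OrderDual.ofDual q) (OrderDual.ofDual p) hpq
      change 1 - z (OrderDual.ofDual p) ≤ 1 - z (OrderDual.ofDual q)
      linarith

/-- splitting and reflecting coordinates of an ordinal sum -/
noncomputable def eLexO (α β : Type*) : (α ⊕ₗ β → ℝ) ≃ᵃ[ℝ] (α → ℝ) × (βᵒᵈ → ℝ) :=
  (eLex α β).trans (AffineEquiv.prodCongr (AffineEquiv.refl ℝ (α → ℝ)) (eDual β))

theorem eLexO_order [Finite α] :
    eLexO α β '' orderPolytope (α ⊕ₗ β) = Glue (orderPolytope α) (orderPolytope βᵒᵈ) := by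
  classical
  apply image_eq_of_iff (eLexO α β).toEquiv
  intro z
  have e1 : ∀ p, (eLexO α β z).1 p = z (toLex (Sum.inl p)) := fun _ => rfl
  have e2 : ∀ q, (eLexO α β z).2 (OrderDual.toDual q) = 1 - z (toLex (Sum.inr q)) := fun _ => rfl
  constructor
  · rintro ⟨a, b, ha, hb, hab, h1, h2⟩
    rw [SC_order_iff ha] at h1
    rw [SC_order_iff hb] at h2
    obtain ⟨h1, h3⟩ := h1
    obtain ⟨h2, h4⟩ := h2
    have h1' : ∀ p, 0 ≤ z (toLex (Sum.inl p)) ∧ z (toLex (Sum.inl p)) ≤ a := h1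
    have h2' : ∀ q, 0 ≤ 1 - z (toLex (Sum.inr q)) ∧ 1 - z (toLex (Sum.inr q)) ≤ b := h2
    refine ⟨fun p => ?_, fun p q hpq => ?_⟩
    · obtain ⟨p, rfl⟩ := toLex.surjective p
      rcases p with p | p
      · have := h1' p; constructor <;> linarith
      · have := h2' p; constructor <;> linarith
    · obtain ⟨p, rfl⟩ := toLex.surjective p
      obtain ⟨q, rfl⟩ := toLex.surjective q
      rcases p with p | p <;> rcases q with q | q
      · exact h3 p q (Sum.Lex.inl_le_inl_iff.1 hpq)
      · have := h1' p
        have := h2' q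
        linarith
      · exact absurd hpq Sum.Lex.not_inr_le_inl
      · have := h4 (OrderDual.toDual q) (OrderDual.toDual p)
          (OrderDual.toDual_le_toDual.2 (Sum.Lex.inr_le_inr_iff.1 hpq))
        change 1 - z (toLex (Sum.inr q)) ≤ 1 - z (toLex (Sum.inr p)) at this
        linarith
  · rintro ⟨h1, h2⟩
    have : ∃ a : ℝ, 0 ≤ a ∧ a ≤ 1 ∧ (∀ p : α, z (toLex (Sum.inl p)) ≤ a) ∧
        ∀ q : β, a ≤ z (toLex (Sum.inr q)) := by
      rcases isEmpty_or_nonempty α with h | h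
      · exact ⟨0, le_rfl, zero_le_one, fun p => isEmptyElim p, fun q => (h1 _).1⟩
      · obtain ⟨p, hp⟩ := Finite.exists_max (fun p : α => z (toLex (Sum.inl p)))
        exact ⟨_, (h1 _).1, (h1 _).2, hp, fun q => h2 _ _ (Sum.Lex.inl_le_inr _ _)⟩
    obtain ⟨a, ha0, ha1, hu, hv⟩ := this
    refine ⟨a, 1 - a, ha0, by linarith, by ring, ?_, ?_⟩
    · rw [SC_order_iff ha0]
      exact ⟨fun p => ⟨(h1 _).1, hu p⟩, fun p q h => h2 _ _ (Sum.Lex.inl_le_inl_iff.2 h)⟩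
    · rw [SC_order_iff (by linarith)]
      refine ⟨fun p => ?_, fun p q h => ?_⟩
      · change 0 ≤ 1 - z (toLex (Sum.inr (OrderDual.ofDual p))) ∧
          1 - z (toLex (Sum.inr (OrderDual.ofDual p))) ≤ 1 - a
        have := hv (OrderDual.ofDual p)
        have := (h1 (toLex (Sum.inr (OrderDual.ofDual p)))).2
        constructor <;> linarith
      · change 1 - z (toLex (Sum.inr (OrderDual.ofDual p))) ≤
          1 - z (toLex (Sum.inr (OrderDual.ofDual q)))
        have := h2 (toLex (Sum.inr (OrderDual.ofDual q))) (toLex (Sum.inr (OrderDual.ofDual p)))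
          (Sum.Lex.inr_le_inr_iff.2 h)
        linarith

theorem chain_dual : (chainPolytope βᵒᵈ : Set (β → ℝ)) = chainPolytope β := by
  ext x
  constructor
  · rintro ⟨h1, h2⟩
    exact ⟨h1, fun s hs => h2 s (fun p hp q hq h => (hs hp hq h).symm)⟩
  · rintro ⟨h1, h2⟩
    exact ⟨h1, fun s hs => h2 s (fun p hp q hq h => (hs hp hq h).symm)⟩

theorem N0_dual [Finite β] (n : ℕ) : N0 (chainPolytope β) n ≤ N0 (orderPolytope βᵒᵈ) n := by
  have h : Finite βᵒᵈ := inferInstanceAs (Finite β)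
  have := N0_chain_le (α := βᵒᵈ) n
  have e : N0 (chainPolytope βᵒᵈ) n = N0 (chainPolytope β) n := by
    rw [← chain_dual (β := β)]; rfl
  rw [← e]; exact this

theorem step_sum [Finite α] [Finite β] (f1 : (SF (chainPolytope α)).Finite)
    (f2 : (SF (chainPolytope β)).Finite)
    (h1 : ∀ n, NS (orderPolytope α) n ≤ NS (chainPolytope α) n)
    (h2 : ∀ n, NS (orderPolytope β) n ≤ NS (chainPolytope β) n) :
    (SF (chainPolytope (α ⊕ β))).Finite ∧
    ∀ n, NS (orderPolytope (α ⊕ β)) n ≤ NS (chainPolytope (α ⊕ β)) n := by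
  constructor
  · have := SF_finite_image (eSum α β).symm (SF_prod_finite f1 f2)
    rw [← eSum_chain, ← image_comp] at this
    simpa using this
  · intro n
    rw [← NS_image (eSum α β), ← NS_image (eSum α β) (chainPolytope _), eSum_order, eSum_chain]
    exact NS_prod_le order_SF_finite order_SF_finite f1 f2 h1 h2 n

theorem step_lex [Finite α] [Finite β] (f1 : (SF (chainPolytope α)).Finite)
    (f2 : (SF (chainPolytope β)).Finite)
    (h1 : ∀ n, NS (orderPolytope α) n ≤ NS (chainPolytope α) n)
    (h2 : ∀ n, NS (orderPolytope β) n ≤ NS (chainPolytope β) n) :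
    (SF (chainPolytope (α ⊕ₗ β))).Finite ∧
    ∀ n, NS (orderPolytope (α ⊕ₗ β)) n ≤ NS (chainPolytope (α ⊕ₗ β)) n := by
  have h : Finite βᵒᵈ := inferInstanceAs (Finite β)
  constructor
  · have := SF_finite_image (eLex α β).symm
      (SF_Glue_finite chain_convex chain_convex chain_zero_ext chain_zero_ext f1 f2)
    rw [← eLex_chain, ← image_comp] at this
    simpa using this
  · intro n
    rw [← NS_image (eLexO α β), ← NS_image (eLex α β), eLexO_order, eLex_chain]
    refine NS_Glue_le order_convex order_convex order_zero_ext order_zero_ext order_SF_finite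
      order_SF_finite chain_convex chain_convex chain_zero_ext chain_zero_ext f1 f2 h1 ?_
      N0_chain_le N0_dual n
    intro n
    rw [← eDual_order, NS_image]
    exact h2 n

end sums

section xfree
variable {α : Type} [PartialOrder α]

theorem chain_greatest {K : Finset α} (hK : IsChain (· ≤ ·) (K : Set α)) (h : K.Nonempty) :
    ∃ k ∈ K, ∀ k' ∈ K, k' ≤ k := by
  obtain ⟨k, hk⟩ := K.exists_maximal h
  refine ⟨k, hk.1, fun k' hk' => ?_⟩
  rcases hK.total hk' hk.1 with h | h
  · exact h
  · exact hk.2 hk' h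

theorem chain_least {K : Finset α} (hK : IsChain (· ≤ ·) (K : Set α)) (h : K.Nonempty) :
    ∃ k ∈ K, ∀ k' ∈ K, k ≤ k' := by
  obtain ⟨k, hk⟩ := K.exists_minimal h
  refine ⟨k, hk.1, fun k' hk' => ?_⟩
  rcases hK.total hk.1 hk' with h | h
  · exact h
  · exact hk.2 hk' h

/-- elements whose strict lower set is a chain -/
def DD (p : α) : Prop := ∀ a b : α, a < p → b < p → a ≤ b ∨ b ≤ a

theorem DD.down {p q : α} (h : DD p) (hq : q ≤ p) : DD q :=
  fun a b ha hb => h a b (ha.trans_le hq) (hb.trans_le hq)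

theorem DD.le_chain {p : α} (h : DD p) {a b : α} (ha : a ≤ p) (hb : b ≤ p) : a ≤ b ∨ b ≤ a := by
  rcases eq_or_lt_of_le ha with rfl | ha
  · exact Or.inr hb
  rcases eq_or_lt_of_le hb with rfl | hb
  · exact Or.inl ha.le
  exact h a b ha hb

theorem not_DD_chain (hx : ¬ HasX α) {p : α} (h : ¬ DD p) {a b : α} (ha : p ≤ a) (hb : p ≤ b) :
    a ≤ b ∨ b ≤ a := by
  rcases eq_or_lt_of_le ha with rfl | ha
  · exact Or.inl hb
  rcases eq_or_lt_of_le hb with rfl | hb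
  · exact Or.inr ha.le
  by_contra! hc
  apply h
  intro c d hcp hdp
  by_contra! hc'
  exact hx ⟨c, d, p, a, b, hcp, hdp, ha, hb, hc'.1, hc'.2, hc.1, hc.2⟩

variable [Fintype α]

open Classical in
/-- sum over a principal ideal -/
noncomputable def sdn (y : α → ℝ) (p : α) : ℝ := ∑ q ∈ Finset.univ.filter (fun q => q ≤ p), y q

open Classical in
/-- sum over a principal filter -/
noncomputable def sup' (y : α → ℝ) (p : α) : ℝ := ∑ q ∈ Finset.univ.filter (fun q => p ≤ q), y q

open Classical in
/-- linear part of the transfer map -/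
noncomputable def Lmap (α : Type) [PartialOrder α] [Fintype α] : (α → ℝ) →ₗ[ℝ] (α → ℝ) where
  toFun y p := if DD p then sdn y p else - sup' y p
  map_add' y z := by
    funext p
    simp only [Pi.add_apply, sdn, sup', Finset.sum_add_distrib]
    split_ifs <;> ring
  map_smul' c y := by
    funext p
    simp only [Pi.smul_apply, smul_eq_mul, sdn, sup', ← Finset.mul_sum, RingHom.id_apply]
    split_ifs <;> ring

theorem Lmap_pos (y : α → ℝ) {p : α} (h : DD p) : Lmap α y p = sdn y p := if_pos h
theorem Lmap_neg (y : α → ℝ) {p : α} (h : ¬ DD p) : Lmap α y p = - sup' y p := if_neg h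

theorem Lmap_inj : Function.Injective (Lmap α) := by
  classical
  rw [injective_iff_map_eq_zero]
  intro y hy
  have h1 : ∀ p, DD p → y p = 0 := by
    intro p
    induction p using WellFoundedLT.induction with
    | ind p ih =>
      intro hp
      have e := congrFun hy p
      rw [Lmap_pos y hp, sdn, Finset.sum_eq_single p] at e
      · exact e
      · intro q hq hne
        have hq := (Finset.mem_filter.1 hq).2
        exact ih q (lt_of_le_of_ne hq hne) (hp.down hq)
      · intro h; simp at h
  have h2 : ∀ p, ¬ DD p → y p = 0 := by
    intro p
    induction p using WellFoundedGT.induction with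
    | ind p ih =>
      intro hp
      have e := congrFun hy p
      rw [Lmap_neg y hp, sup', Finset.sum_eq_single p] at e
      · simpa using e
      · intro q hq hne
        have hq := (Finset.mem_filter.1 hq).2
        exact ih q (lt_of_le_of_ne hq hne.symm) (fun h => hp (h.down hq))
      · intro h; simp at h
  funext p
  by_cases h : DD p
  · exact h1 p h
  · exact h2 p h

open Classical in
/-- the affine transfer map -/
noncomputable def eX (α : Type) [PartialOrder α] [Fintype α] : (α → ℝ) ≃ᵃ[ℝ] (α → ℝ) :=
  (LinearEquiv.ofInjectiveEndo (Lmap α) Lmap_inj).toAffineEquiv.trans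
    (AffineEquiv.constVAdd ℝ (α → ℝ) (fun p => if DD p then 0 else 1))

theorem eX_pos (y : α → ℝ) {p : α} (h : DD p) : eX α y p = sdn y p := by
  classical
  change (if DD p then (0 : ℝ) else 1) + Lmap α y p = _
  rw [if_pos h, zero_add, Lmap_pos y h]

theorem eX_neg (y : α → ℝ) {p : α} (h : ¬ DD p) : eX α y p = 1 - sup' y p := by
  classical
  change (if DD p then (0 : ℝ) else 1) + Lmap α y p = _
  rw [if_neg h, Lmap_neg y h]; ring

theorem sdn_nonneg {y : α → ℝ} (h : ∀ p, 0 ≤ y p) (p : α) : 0 ≤ sdn y p :=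
  Finset.sum_nonneg (fun q _ => h q)

theorem sup'_nonneg {y : α → ℝ} (h : ∀ p, 0 ≤ y p) (p : α) : 0 ≤ sup' y p :=
  Finset.sum_nonneg (fun q _ => h q)

theorem sdn_mono {y : α → ℝ} (h : ∀ p, 0 ≤ y p) {p q : α} (hpq : p ≤ q) : sdn y p ≤ sdn y q := by
  classical
  refine Finset.sum_le_sum_of_subset_of_nonneg ?_ (fun r _ _ => h r)
  intro r hr
  simp only [Finset.mem_filter, Finset.mem_univ, true_and] at hr ⊢
  exact hr.trans hpq

theorem sup'_mono {y : α → ℝ} (h : ∀ p, 0 ≤ y p) {p q : α} (hpq : p ≤ q) : sup' y q ≤ sup' y p := by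
  classical
  refine Finset.sum_le_sum_of_subset_of_nonneg ?_ (fun r _ _ => h r)
  intro r hr
  simp only [Finset.mem_filter, Finset.mem_univ, true_and] at hr ⊢
  exact hpq.trans hr

theorem eX_image (hx : ¬ HasX α) : eX α '' chainPolytope α = orderPolytope α := by
  classical
  apply image_eq_of_iff (eX α).toEquiv
  intro y
  change eX α y ∈ orderPolytope α ↔ _
  constructor
  · rintro ⟨h1, h2⟩
    have hy : ∀ p, 0 ≤ y p := by
      intro p
      by_cases hp : DD p
      · have e : sdn y p = y p + ∑ q ∈ Finset.univ.filter (fun q => q < p), y q := by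
          rw [sdn, ← Finset.sum_insert (by simp)]
          congr 1
          ext q; simp [le_iff_eq_or_lt]
        rcases (Finset.univ.filter (fun q => q < p)).eq_empty_or_nonempty with he | hne
        · rw [he, Finset.sum_empty, add_zero] at e
          rw [← e, ← eX_pos y hp]; exact (h1 p).1
        · obtain ⟨m, hm, hmax⟩ := chain_greatest (K := Finset.univ.filter (fun q => q < p)) (by
            intro a ha b hb _
            simp only [Finset.coe_filter, Finset.mem_univ, true_and, mem_ofPred_eq] at ha hb
            exact hp a b ha hb) hne
          simp only [Finset.mem_filter, Finset.mem_univ, true_and] at hm hmax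
          have e2 : ∑ q ∈ Finset.univ.filter (fun q => q < p), y q = sdn y m := by
            rw [sdn]; congr 1
            ext q
            simp only [Finset.mem_filter, Finset.mem_univ, true_and]
            exact ⟨hmax q, fun h => h.trans_lt hm⟩
          have h3 := h2 m p hm.le
          rw [eX_pos y hp, eX_pos y (hp.down hm.le)] at h3
          linarith
      · have e : sup' y p = y p + ∑ q ∈ Finset.univ.filter (fun q => p < q), y q := by
          rw [sup', ← Finset.sum_insert (by simp)]
          congr 1
          ext q; simp [le_iff_eq_or_lt, eq_comm]
        rcases (Finset.univ.filter (fun q => p < q)).eq_empty_or_nonempty with he | hne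
        · rw [he, Finset.sum_empty, add_zero] at e
          have := (h1 p).2
          rw [eX_neg y hp] at this
          linarith
        · obtain ⟨m, hm, hmax⟩ := chain_least (K := Finset.univ.filter (fun q => p < q)) (by
            intro a ha b hb _
            simp only [Finset.coe_filter, Finset.mem_univ, true_and, mem_ofPred_eq] at ha hb
            exact not_DD_chain hx hp ha.le hb.le) hne
          simp only [Finset.mem_filter, Finset.mem_univ, true_and] at hm hmax
          have e2 : ∑ q ∈ Finset.univ.filter (fun q => p < q), y q = sup' y m := by
            rw [sup']; congr 1
            ext q
            simp only [Finset.mem_filter, Finset.mem_univ, true_and]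
            exact ⟨hmax q, fun h => hm.trans_le h⟩
          have h3 := h2 p m hm.le
          rw [eX_neg y hp, eX_neg y (fun h => hp (h.down hm.le))] at h3
          linarith
    refine ⟨hy, fun s hs => ?_⟩
    rw [← Finset.sum_filter_add_sum_filter_not s DD]
    have b1 : ∀ m, (∀ q ∈ s.filter DD, q ≤ m) → ∑ q ∈ s.filter DD, y q ≤ sdn y m := by
      intro m hm
      refine Finset.sum_le_sum_of_subset_of_nonneg ?_ (fun r _ _ => hy r)
      intro q hq
      simpa using hm q hq
    have b2 : ∀ m, (∀ q ∈ s.filter (fun q => ¬ DD q), m ≤ q) →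
        ∑ q ∈ s.filter (fun q => ¬ DD q), y q ≤ sup' y m := by
      intro m hm
      refine Finset.sum_le_sum_of_subset_of_nonneg ?_ (fun r _ _ => hy r)
      intro q hq
      simpa using hm q hq
    have c1 : IsChain (· ≤ ·) (s.filter DD : Set α) := hs.mono (fun r hr => (Finset.mem_filter.1 hr).1)
    have c2 : IsChain (· ≤ ·) (s.filter (fun q => ¬ DD q) : Set α) := hs.mono (fun r hr => (Finset.mem_filter.1 hr).1)
    rcases (s.filter DD).eq_empty_or_nonempty with he | hne
    · rw [he, Finset.sum_empty, zero_add]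
      rcases (s.filter (fun q => ¬ DD q)).eq_empty_or_nonempty with he' | hne'
      · rw [he', Finset.sum_empty]; norm_num
      · obtain ⟨n, hn, hmin⟩ := chain_least c2 hne'
        have h3 := b2 n hmin
        have h4 := (h1 n).1
        rw [eX_neg y (Finset.mem_filter.1 hn).2] at h4
        linarith
    · obtain ⟨m, hm, hmax⟩ := chain_greatest c1 hne
      have h5 := b1 m hmax
      have hm := Finset.mem_filter.1 hm
      rcases (s.filter (fun q => ¬ DD q)).eq_empty_or_nonempty with he' | hne'
      · rw [he', Finset.sum_empty, add_zero]
        have h4 := (h1 m).2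
        rw [eX_pos y hm.2] at h4
        linarith
      · obtain ⟨n, hn, hmin⟩ := chain_least c2 hne'
        have h3 := b2 n hmin
        have hn := Finset.mem_filter.1 hn
        have hmn : m ≤ n := by
          rcases hs.total hm.1 hn.1 with h | h
          · exact h
          · exact absurd (hm.2.down h) hn.2
        have h4 := h2 m n hmn
        rw [eX_pos y hm.2, eX_neg y hn.2] at h4
        linarith
  · rintro ⟨h1, h2⟩
    refine ⟨fun p => ?_, fun p q hpq => ?_⟩
    · by_cases hp : DD p
      · rw [eX_pos y hp]
        refine ⟨sdn_nonneg h1 p, h2 _ ?_⟩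
        intro a ha b hb _
        simp only [Finset.coe_filter, Finset.mem_univ, true_and, mem_ofPred_eq] at ha hb
        exact hp.le_chain ha hb
      · rw [eX_neg y hp]
        have h3 := sup'_nonneg h1 p
        have h4 : sup' y p ≤ 1 := by
          refine h2 _ ?_
          intro a ha b hb _
          simp only [Finset.coe_filter, Finset.mem_univ, true_and, mem_ofPred_eq] at ha hb
          exact not_DD_chain hx hp ha hb
        constructor <;> linarith
    · by_cases hq : DD q
      · rw [eX_pos y hq, eX_pos y (hq.down hpq)]
        exact sdn_mono h1 hpq
      · rw [eX_neg y hq]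
        by_cases hp : DD p
        · rw [eX_pos y hp]
          have hdis : Disjoint (Finset.univ.filter (fun r => r ≤ p))
              (Finset.univ.filter (fun r => q ≤ r)) := by
            rw [Finset.disjoint_left]
            intro r h3 h4
            simp only [Finset.mem_filter, Finset.mem_univ, true_and] at h3 h4
            exact hq (hp.down (h4.trans h3))
          have := h2 (Finset.univ.filter (fun r => r ≤ p) ∪ Finset.univ.filter (fun r => q ≤ r)) (by
            intro a ha b hb _
            simp only [Finset.mem_coe, Finset.mem_union, Finset.mem_filter, Finset.mem_univ,
              true_and] at ha hb
            rcases ha with ha | ha <;> rcases hb with hb | hb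
            · exact hp.le_chain ha hb
            · exact Or.inl (ha.trans (hpq.trans hb))
            · exact Or.inr (hb.trans (hpq.trans ha))
            · exact not_DD_chain hx hq ha hb)
          rw [Finset.sum_union hdis] at this
          change sdn y p + sup' y q ≤ 1 at this
          linarith
        · rw [eX_neg y hp]
          linarith [sup'_mono h1 hpq]

end xfree

theorem fam_main (α : Type) (inst : PartialOrder α) (h : InFam α inst) :
    Finite α ∧ (SF (@chainPolytope α inst)).Finite ∧
      ∀ n, NS (@orderPolytope α inst) n ≤ NS (@chainPolytope α inst) n := by
  induction h with
  | xfree α inst hfin hx =>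
    have := Fintype.ofFinite α
    refine ⟨hfin, ?_, fun n => ?_⟩
    · have := SF_finite_image (eX α).symm (order_SF_finite (α := α))
      rw [← eX_image hx, ← image_comp] at this
      simpa using this
    · rw [← eX_image hx, NS_image]
  | disjUnion ia ib _ _ iha ihb =>
    obtain ⟨f1, g1, h1⟩ := iha
    obtain ⟨f2, g2, h2⟩ := ihb
    exact ⟨inferInstance, step_sum g1 g2 h1 h2⟩
  | @ordinalSum α β ia ib _ _ iha ihb =>
    obtain ⟨f1, g1, h1⟩ := iha
    obtain ⟨f2, g2, h2⟩ := ihb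
    exact ⟨inferInstanceAs (Finite (α ⊕ β)), step_lex g1 g2 h1 h2⟩

/-- every poset in the family `F` satisfies `s_k(O(P)) ≤ s_k(C(P))`
for all `k ≥ 0`. -/
theorem family_simpCount_ineq (α : Type) (inst : PartialOrder α) (h : InFam α inst) :
    ∀ k : ℤ, 0 ≤ k →
      simpCount (@orderPolytope α inst) k ≤ simpCount (@chainPolytope α inst) k := by
  intro k hk
  obtain ⟨hf, _, hn⟩ := fam_main α inst h
  lift k to ℕ using hk
  rw [simpCount_eq, simpCount_eq]
  exact hn (k + 1)
end

section
/- For any finite poset P, both the order polytope O(P) and the chain polytope C(P) have a simplex face of dimension equal to the height of P (the maximum cardinality of a chain). -/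
open Set

variable {E : Type*} [AddCommGroup E] [Module ℝ E]

/-- The height of a finite poset: the maximum cardinality of a chain. -/
noncomputable def posetHeight (α : Type*) [PartialOrder α] : ℕ :=
  sSup {n | ∃ s : Finset α, IsChain (· ≤ ·) (s : Set α) ∧ s.card = n}

theorem aux_simplex {α : Type*} [Fintype α] {n : ℕ} (v : Fin n → (α → ℝ))
    (hv : LinearIndependent ℝ v) :
    IsSimplex (convexHull ℝ (insert 0 (Set.range v))) ∧
      polyDim (convexHull ℝ (insert 0 (Set.range v))) = (n : ℤ) := by
  classical
  let w : Option (Fin n) → (α → ℝ) := fun o => o.elim 0 v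
  have hw : Set.range w = insert 0 (Set.range v) := by
    ext x
    simp [w, Option.exists, eq_comm]
  rw [← hw]
  have haff : AffineIndependent ℝ w := by
    rw [affineIndependent_iff_linearIndependent_vsub ℝ w none]
    have hinj : LinearIndependent ℝ
        (v ∘ fun i : {x : Option (Fin n) // x ≠ none} => i.1.get (Option.ne_none_iff_isSome.1 i.2)) := by
      apply hv.comp
      rintro ⟨_ | a, ha⟩ ⟨_ | b, hb⟩ h
      · simp at ha
      · simp at ha
      · simp at hb
      · simpa using h
    have heq : (fun i : {x : Option (Fin n) // x ≠ none} => w i -ᵥ w none) =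
        (v ∘ fun i : {x : Option (Fin n) // x ≠ none} =>
          i.1.get (Option.ne_none_iff_isSome.1 i.2)) := by
      ext ⟨_ | a, ha⟩ q
      · simp at ha
      · simp [w]
    rw [heq]
    exact hinj
  have hfr : Module.finrank ℝ (vectorSpan ℝ (Set.range w)) = n :=
    haff.finrank_vectorSpan (by simp)
  have hfin : (Set.range w).Finite := Set.finite_range w
  have hvs : ∀ s : Set (α → ℝ), vectorSpan ℝ (convexHull ℝ s) = vectorSpan ℝ s := by
    intro s
    rw [← direction_affineSpan, affineSpan_convexHull, direction_affineSpan]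
  have hne : convexHull ℝ (Set.range w) ≠ ∅ := by
    rw [← Set.nonempty_iff_ne_empty, convexHull_nonempty_iff]
    exact Set.range_nonempty w
  have hdim : polyDim (convexHull ℝ (Set.range w)) = (n : ℤ) := by
    rw [polyDim, if_neg hne, hvs, hfr]
  refine ⟨⟨⟨hfin.toFinset, by simp⟩, ?_⟩, hdim⟩
  rw [hdim, vertexCount]
  set X := (convexHull ℝ (Set.range w)).extremePoints ℝ with hX
  have hsub : X ⊆ Set.range w := extremePoints_convexHull_subset
  have hXf : X.Finite := hfin.subset hsub
  have hKM : convexHull ℝ X = convexHull ℝ (Set.range w) := by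
    have := closure_convexHull_extremePoints (hfin.isCompact_convexHull ℝ)
      (convex_convexHull ℝ (Set.range w))
    rwa [← hX, (hXf.isClosed_convexHull ℝ).closure_eq] at this
  have hle : X.ncard ≤ n + 1 := by
    refine (Set.ncard_le_ncard hsub hfin).trans ?_
    rw [Set.ncard_eq_toFinset_card', Set.toFinset_range]
    refine Finset.card_image_le.trans ?_
    simp
  have hXne : X.Nonempty := by
    rw [← convexHull_nonempty_iff (𝕜 := ℝ), hKM]
    exact Set.nonempty_iff_ne_empty.2 hne
  have hge : n + 1 ≤ X.ncard := by
    have := hXf.fintype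
    have : Nonempty X := hXne.to_subtype
    have h := finrank_vectorSpan_range_add_one_le ℝ (Subtype.val : X → (α → ℝ))
    rw [Subtype.range_coe, ← hvs, hKM, hvs, hfr] at h
    rwa [Set.ncard_eq_toFinset_card', Set.toFinset_card]
  have : X.ncard = n + 1 := le_antisymm hle hge
  exact_mod_cast this

theorem aux_comb {E : Type*} [AddCommGroup E] [Module ℝ E] {n : ℕ} (v : Fin n → E)
    (a : Fin n → ℝ) (h0 : ∀ i, 0 ≤ a i) (h1 : ∑ i, a i ≤ 1) :
    ∑ i, a i • v i ∈ convexHull ℝ (insert 0 (Set.range v)) := by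
  have h := (convex_convexHull ℝ (insert 0 (Set.range v))).sum_mem
    (t := Finset.univ) (w := fun o : Option (Fin n) => o.elim (1 - ∑ i, a i) a)
    (z := fun o => o.elim 0 v) ?_ ?_ ?_
  · simpa [Fintype.sum_option] using h
  · rintro (_ | i) -
    · simpa using h1
    · exact h0 i
  · simp [Fintype.sum_option]
  · rintro (_ | i) -
    · exact subset_convexHull _ _ (by simp)
    · exact subset_convexHull _ _ (by simp)

theorem aux_enum (α : Type*) [Fintype α] [PartialOrder α] :
    ∃ p : Fin (posetHeight α) → α, ∀ i j, p i ≤ p j ↔ i ≤ j := by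
  classical
  have hmem : posetHeight α ∈
      {n | ∃ s : Finset α, IsChain (· ≤ ·) (s : Set α) ∧ s.card = n} := by
    apply Nat.sSup_mem
    · exact ⟨0, ∅, by simp, rfl⟩
    · refine ⟨Fintype.card α, ?_⟩
      rintro _ ⟨s, -, rfl⟩
      exact Finset.card_le_univ s
  obtain ⟨s, hs, hc⟩ := hmem
  letI : LinearOrder (s : Set α) := hs.linearOrder
  let e := Fintype.orderIsoFinOfCardEq (s : Set α) (k := posetHeight α) (by simpa using hc)
  exact ⟨fun i => (e i : α), fun i j => e.le_iff_le⟩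

theorem aux_chain (α : Type*) [Fintype α] [PartialOrder α] {n : ℕ} (p : Fin n → α)
    (hp : ∀ i j, p i ≤ p j ↔ i ≤ j) :
    ∃ F : Set (α → ℝ), IsFaceOf F (chainPolytope α) ∧ IsSimplex F ∧ polyDim F = (n : ℤ) := by
  classical
  have hinj : Function.Injective p := fun i j h =>
    le_antisymm ((hp i j).1 h.le) ((hp j i).1 h.ge)
  let v : Fin n → (α → ℝ) := fun i => Pi.single (p i) 1
  have hv : LinearIndependent ℝ v := by
    rw [Fintype.linearIndependent_iff]
    intro g hg j
    have := congrFun hg (p j)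
    simpa [v, Finset.sum_apply, Pi.single_apply, hinj.eq_iff] using this
  have hF : convexHull ℝ (insert 0 (Set.range v)) =
      {x | x ∈ chainPolytope α ∧ ∀ q, q ∉ Set.range p → x q = 0} := by
    apply Set.Subset.antisymm
    · apply convexHull_min
      · rintro x (rfl | ⟨i, rfl⟩)
        · exact ⟨⟨by simp, by simp⟩, by simp⟩
        · refine ⟨⟨fun q => ?_, fun s _ => ?_⟩, fun q hq => ?_⟩
          · simp only [v, Pi.single_apply]; split_ifs <;> norm_num
          · simp only [v, Pi.single_apply, Finset.sum_ite_eq']; split_ifs <;> norm_num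
          · simp only [v, Pi.single_apply]; rw [if_neg]; rintro rfl; exact hq ⟨i, rfl⟩
      · rintro x ⟨⟨hx0, hx1⟩, hx2⟩ y ⟨⟨hy0, hy1⟩, hy2⟩ a b ha hb hab
        refine ⟨⟨fun q => ?_, fun s hs => ?_⟩, fun q hq => ?_⟩
        · have := hx0 q; have := hy0 q
          simp only [Pi.add_apply, Pi.smul_apply, smul_eq_mul]; positivity
        · simp only [Pi.add_apply, Pi.smul_apply, smul_eq_mul, Finset.sum_add_distrib,
            ← Finset.mul_sum]
          nlinarith [mul_le_mul_of_nonneg_left (hx1 s hs) ha,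
            mul_le_mul_of_nonneg_left (hy1 s hs) hb]
        · simp [hx2 q hq, hy2 q hq]
    · rintro x ⟨⟨hx0, hx1⟩, hx2⟩
      have hx : x = ∑ i, x (p i) • v i := by
        ext q
        by_cases hq : q ∈ Set.range p
        · obtain ⟨j, rfl⟩ := hq
          simp [v, Finset.sum_apply, Pi.single_apply, hinj.eq_iff]
        · rw [hx2 q hq, Finset.sum_apply, Finset.sum_eq_zero]
          intro i _
          have : q ≠ p i := by rintro rfl; exact hq ⟨i, rfl⟩
          simp [v, this]
      rw [hx]
      apply aux_comb _ _ (fun i => hx0 _)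
      have := hx1 (Finset.univ.image p) ?_
      · rwa [Finset.sum_image hinj.injOn] at this
      · rintro a ha b hb -
        simp only [Finset.coe_image, Finset.coe_univ, Set.image_univ] at ha hb
        obtain ⟨i, rfl⟩ := ha
        obtain ⟨j, rfl⟩ := hb
        exact (le_total i j).imp (hp i j).2 (hp j i).2
  refine ⟨_, ?_, aux_simplex v hv⟩
  rw [hF]
  refine ⟨fun x hx => hx.1, ?_⟩
  rintro x hx y hy z hz ⟨a, b, ha, hb, hab, rfl⟩
  refine ⟨hx, fun q hq => ?_⟩
  have h := hz.2 q hq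
  simp only [Pi.add_apply, Pi.smul_apply, smul_eq_mul] at h
  have h1 := hx.1 q
  have h2 := mul_nonneg hb.le (hy.1 q)
  have h3 := mul_nonneg ha.le h1
  have h4 : a * x q = 0 := by linarith
  exact (mul_eq_zero.1 h4).resolve_left ha.ne'

theorem aux_order (α : Type*) [Fintype α] [PartialOrder α] {n : ℕ} (p : Fin n → α)
    (hp : ∀ i j, p i ≤ p j ↔ i ≤ j) :
    ∃ F : Set (α → ℝ), IsFaceOf F (orderPolytope α) ∧ IsSimplex F ∧ polyDim F = (n : ℤ) := by
  classical
  let v : Fin n → (α → ℝ) := fun i q => if p i ≤ q then 1 else 0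
  have hv : LinearIndependent ℝ v := by
    rw [Fintype.linearIndependent_iff]
    intro g hg j
    induction j using WellFoundedLT.induction with
    | ind j ih =>
      have := congrFun hg (p j)
      simp only [v, Finset.sum_apply, Pi.smul_apply, hp, smul_eq_mul, Pi.zero_apply] at this
      rw [Finset.sum_eq_single j] at this
      · simpa using this
      · intro i _ hij
        by_cases h : i ≤ j
        · rw [ih i (lt_of_le_of_ne h hij), zero_mul]
        · simp [h]
      · simp
  have hF : convexHull ℝ (insert 0 (Set.range v)) =
      {x | x ∈ orderPolytope α ∧ (∀ q, (∀ i, ¬ p i ≤ q) → x q = 0) ∧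
        ∀ q i, p i ≤ q → (∀ j, p j ≤ q → j ≤ i) → x q = x (p i)} := by
    apply Set.Subset.antisymm
    · apply convexHull_min
      · rintro x (rfl | ⟨i, rfl⟩)
        · exact ⟨⟨by simp, by simp⟩, by simp, by simp⟩
        · refine ⟨⟨fun q => ?_, fun q r hqr => ?_⟩, fun q hq => ?_, fun q j h1 h2 => ?_⟩
          · simp only [v]; split_ifs <;> norm_num
          · simp only [v]
            by_cases h : p i ≤ q
            · simp [h, h.trans hqr]
            · simp only [h, if_false]; split_ifs <;> norm_num
          · simp [v, hq]
          · have : p i ≤ q ↔ p i ≤ p j := ⟨fun h => (hp _ _).2 (h2 i h), fun h => h.trans h1⟩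
            simp [v, this]
      · rintro x ⟨⟨hx0, hx1⟩, hx2, hx3⟩ y ⟨⟨hy0, hy1⟩, hy2, hy3⟩ a b ha hb hab
        refine ⟨⟨fun q => ?_, fun q r hqr => ?_⟩, fun q hq => ?_, fun q j h1 h2 => ?_⟩
        · simp only [Pi.add_apply, Pi.smul_apply, smul_eq_mul]
          have h1 := mul_nonneg ha (hx0 q).1
          have h2 := mul_nonneg hb (hy0 q).1
          have h3 := mul_le_mul_of_nonneg_left (hx0 q).2 ha
          have h4 := mul_le_mul_of_nonneg_left (hy0 q).2 hb
          constructor <;> linarith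
        · simp only [Pi.add_apply, Pi.smul_apply, smul_eq_mul]
          have h3 := mul_le_mul_of_nonneg_left (hx1 q r hqr) ha
          have h4 := mul_le_mul_of_nonneg_left (hy1 q r hqr) hb
          linarith
        · simp [hx2 q hq, hy2 q hq]
        · simp [hx3 q j h1 h2, hy3 q j h1 h2]
    · rintro x ⟨⟨hx0, hx1⟩, hx2, hx3⟩
      let g : ℕ → ℝ := fun k => if h : 0 < k ∧ k ≤ n then x (p ⟨k - 1, by omega⟩) else 0
      have g0 : g 0 = 0 := by simp [g]
      have gs : ∀ i : Fin n, g (i + 1) = x (p i) := by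
        intro i
        have : (0 : ℕ) < (i : ℕ) + 1 ∧ (i : ℕ) + 1 ≤ n := by omega
        simp only [g, dif_pos this, Nat.add_sub_cancel]
      have hx : x = ∑ i : Fin n, (g (i + 1) - g i) • v i := by
        ext q
        simp only [Finset.sum_apply, Pi.smul_apply, smul_eq_mul, v, mul_ite, mul_one, mul_zero]
        by_cases hq : ∃ i, p i ≤ q
        · obtain ⟨i, hi, hmax⟩ := (Set.toFinite {i | p i ≤ q}).exists_maximal hq
          have hmax' : ∀ j, p j ≤ q → j ≤ i := fun j hj =>
            (le_total i j).elim (fun h => hmax hj h) id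
          have hiff : ∀ j, p j ≤ q ↔ (j : ℕ) ≤ i := fun j =>
            ⟨fun h => hmax' j h, fun h => ((hp j i).2 h).trans hi⟩
          simp only [hiff]
          rw [hx3 q i hi hmax', Fin.sum_univ_eq_sum_range
            (fun k => if k ≤ (i : ℕ) then g (k + 1) - g k else 0), ← Finset.sum_filter]
          have : (Finset.range n).filter (fun k => k ≤ (i : ℕ)) = Finset.range (i + 1) := by
            ext k; simp; omega
          rw [this, Finset.sum_range_sub, gs, g0, sub_zero]
        · push Not at hq
          rw [hx2 q hq]
          simp [hq]
      rw [hx]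
      apply aux_comb v (fun i => g (i + 1) - g i)
      · intro i
        rcases i with ⟨_ | k, hk⟩
        · have := gs ⟨0, hk⟩
          simp only at this ⊢
          rw [this, g0]
          linarith [(hx0 (p ⟨0, hk⟩)).1]
        · have h1 := gs ⟨k + 1, hk⟩
          have h2 := gs ⟨k, by omega⟩
          simp only at h1 h2 ⊢
          rw [h1, h2, sub_nonneg]
          apply hx1
          rw [hp]
          simp
      · rw [Fin.sum_univ_eq_sum_range (fun k => g (k + 1) - g k), Finset.sum_range_sub, g0, sub_zero]
        simp only [g]
        split_ifs
        · exact (hx0 _).2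
        · norm_num
  refine ⟨_, ?_, aux_simplex v hv⟩
  rw [hF]
  refine ⟨fun x hx => hx.1, ?_⟩
  rintro x hx y hy z hz ⟨a, b, ha, hb, hab, rfl⟩
  refine ⟨hx, fun q hq => ?_, fun q i h1 h2 => ?_⟩
  · have h := hz.2.1 q hq
    simp only [Pi.add_apply, Pi.smul_apply, smul_eq_mul] at h
    have h2 := mul_nonneg hb.le (hy.1 q).1
    have h3 := mul_nonneg ha.le (hx.1 q).1
    have h4 : a * x q = 0 := by linarith
    exact (mul_eq_zero.1 h4).resolve_left ha.ne'
  · have h := hz.2.2 q i h1 h2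
    simp only [Pi.add_apply, Pi.smul_apply, smul_eq_mul] at h
    have h5 := mul_le_mul_of_nonneg_left (hx.2 _ _ h1) ha.le
    have h6 := mul_le_mul_of_nonneg_left (hy.2 _ _ h1) hb.le
    have h7 : a * x q = a * x (p i) := by linarith
    exact mul_left_cancel₀ ha.ne' h7

/-- both the order polytope and the chain polytope of a finite poset have
a simplex face of dimension equal to the height of the poset. -/
theorem simplex_face_of_height (α : Type*) [Fintype α] [PartialOrder α] :
    (∃ F : Set (α → ℝ), IsFaceOf F (orderPolytope α) ∧ IsSimplex F ∧
      polyDim F = (posetHeight α : ℤ)) ∧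
    (∃ F : Set (α → ℝ), IsFaceOf F (chainPolytope α) ∧ IsSimplex F ∧
      polyDim F = (posetHeight α : ℤ)) := by
  obtain ⟨p, hp⟩ := aux_enum α
  exact ⟨aux_order α p hp, aux_chain α p hp⟩
end
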